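/- arXiv:1006.5074 — 6 statements merged into one kernel-verified Lean document; each statement's English description precedes it below -/
import Mathlib

section
/- Let G be a group, H a subgroup of G, and a ∈ G. Suppose that Ha ∩ a⁻¹H ≠ ∅ and that the subgroup K = H ∩ (a⁻¹Ha) is a normal subgroup of H. Then K is a normal subgroup of the subgroup generated by H ∪ {a}. -/
open Pointwise

/-- Let `G` be a group, `H` a subgroup of `G`, and `a ∈ G`. Suppose that
`Ha ∩ a⁻¹H ≠ ∅` and that the subgroup `K = H ∩ (a⁻¹Ha)` is a normal subgroup of `H`.
Then `K` is a normal subgroup of the subgroup generated by `H ∪ {a}`. -/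
theorem stmt_2 {G : Type*} [Group G] (H : Subgroup G) (a : G)
    (hne : ((((H : Set G) * {a})) ∩ ({a⁻¹} * (H : Set G))).Nonempty)
    (K : Subgroup G)
    (hK : (K : Set G) = (H : Set G) ∩ ({a⁻¹} * (H : Set G) * {a}))
    (hnormH : ∀ h ∈ H, ∀ x ∈ K, h * x * h⁻¹ ∈ K) :
    ∀ g ∈ Subgroup.closure ((H : Set G) ∪ {a}), ∀ x ∈ K, g * x * g⁻¹ ∈ K := by
  have mem : ∀ x, x ∈ K ↔ x ∈ H ∧ a * x * a⁻¹ ∈ H := by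
    intro x
    rw [← SetLike.mem_coe, hK]
    constructor
    · rintro ⟨h1, y, ⟨b, hb, c, hc, rfl⟩, d, hd, rfl⟩
      rw [Set.mem_singleton_iff] at hb hd
      subst hb hd
      refine ⟨h1, ?_⟩
      have : d * (d⁻¹ * c * d) * d⁻¹ = c := by group
      change d * (d⁻¹ * c * d) * d⁻¹ ∈ H
      rw [this]
      exact hc
    · rintro ⟨h1, h2⟩
      refine ⟨h1, a⁻¹ * (a * x * a⁻¹), ⟨a⁻¹, rfl, _, h2, rfl⟩, a, rfl, ?_⟩
      change a⁻¹ * (a * x * a⁻¹) * a = x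
      group
  obtain ⟨z, ⟨h, hh, a', ha', hz⟩, ⟨b, hb, k, hk, hz'⟩⟩ := hne
  rw [Set.mem_singleton_iff] at ha' hb
  subst ha' hb
  have e : h * a' = a'⁻¹ * k := hz.trans hz'.symm
  have ek : k = a' * h * a' := by rw [mul_assoc, e]; group
  have hh' : h ∈ H := hh
  have hk' : k ∈ H := hk
  have A : ∀ x ∈ K, a' * x * a'⁻¹ ∈ K := by
    intro x hx
    obtain ⟨hx1, hx2⟩ := (mem x).1 hx
    have hy : k⁻¹ * (a' * x * a'⁻¹) * k ∈ K := by
      rw [mem]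
      refine ⟨H.mul_mem (H.mul_mem (H.inv_mem hk') hx2) hk', ?_⟩
      have : a' * (k⁻¹ * (a' * x * a'⁻¹) * k) * a'⁻¹ = h⁻¹ * x * h := by
        rw [ek]; group
      rw [this]
      exact H.mul_mem (H.mul_mem (H.inv_mem hh') hx1) hh'
    have := hnormH k hk' _ hy
    have e2 : k * (k⁻¹ * (a' * x * a'⁻¹) * k) * k⁻¹ = a' * x * a'⁻¹ := by group
    exact e2 ▸ this
  have B : ∀ x ∈ K, a'⁻¹ * x * a' ∈ K := by
    intro x hx
    have h1 := hnormH h hh' _ (A _ (hnormH _ (H.inv_mem hk') x hx))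
    have e2 : h * (a' * (k⁻¹ * x * k⁻¹⁻¹) * a'⁻¹) * h⁻¹ = a'⁻¹ * x * a' := by
      rw [ek]; group
    exact e2 ▸ h1
  have main : ∀ g ∈ Subgroup.closure ((H : Set G) ∪ {a'}),
      ∀ x ∈ K, g * x * g⁻¹ ∈ K ∧ g⁻¹ * x * g ∈ K := by
    intro g hg
    induction hg using Subgroup.closure_induction with
    | mem g hg =>
      intro x hx
      rcases hg with hg | hg
      · have := hnormH _ (H.inv_mem hg) x hx
        rw [inv_inv] at this
        exact ⟨hnormH g hg x hx, this⟩
      · rw [Set.mem_singleton_iff] at hg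
        subst hg
        exact ⟨A x hx, B x hx⟩
    | one => intro x hx; simpa using hx
    | mul p q _ _ hp hq =>
      intro x hx
      have h1 := (hp _ (hq x hx).1).1
      have h2 := (hq _ (hp x hx).2).2
      simp only [mul_inv_rev, mul_assoc] at h1 h2 ⊢
      exact ⟨h1, h2⟩
    | inv p _ hp =>
      intro x hx
      rw [inv_inv]
      exact (hp x hx).symm
  exact fun g hg x hx => (main g hg x hx).1
end

section
/- Let G be a finite group and S a generating subset of G with 1 ∈ S and S ≠ G. Then the minimum of |XS| − |X| over all nonempty subsets X ⊆ G with XS a proper subset of G is equal to the minimum of |XS⁻¹| − |X| over all nonempty subsets X ⊆ G with XS⁻¹ a proper subset of G. (That is, κ(S) = κ(S⁻¹).) -/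
open Pointwise

variable {G : Type*} [Group G] [DecidableEq G]

/-- `X` belongs to the family `F(S)`: `X` is nonempty and `XS` is a (finite)
proper subset of `G`. -/
def MemFam (S X : Finset G) : Prop :=
  X.Nonempty ∧ (↑(X * S) : Set G) ≠ Set.univ

theorem aux_dual {H : Type*} [Group H] [Fintype H] [DecidableEq H] (S X : Finset H)
    (hX : MemFam S X) : ∃ Y : Finset H, MemFam S⁻¹ Y ∧
      (Y * S⁻¹).card - Y.card ≤ (X * S).card - X.card := by
  obtain ⟨⟨x, hx⟩, hne⟩ := hX
  have hsub : ((X * S)ᶜ * S⁻¹) ⊆ Xᶜ := by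
    intro z hz
    obtain ⟨y, hy, t, ht, rfl⟩ := Finset.mem_mul.1 hz
    rw [Finset.mem_compl] at hy ⊢
    intro hyt
    apply hy
    have := Finset.mul_mem_mul hyt (Finset.mem_inv'.1 ht)
    simpa using this
  refine ⟨(X * S)ᶜ, ⟨?_, ?_⟩, ?_⟩
  · rw [Finset.nonempty_iff_ne_empty]
    intro h
    apply hne
    rw [Finset.compl_eq_empty_iff] at h
    rw [h, Finset.coe_univ]
  · intro h
    have hx2 : x ∈ (↑((X * S)ᶜ * S⁻¹) : Set H) := by rw [h]; trivial
    exact Finset.mem_compl.1 (hsub (Finset.mem_coe.1 hx2)) hx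
  · have h1 := Finset.card_le_card hsub
    have h2 := Finset.card_compl X
    have h3 := Finset.card_compl (X * S)
    have h4 := Finset.card_le_univ X
    have h5 := Finset.card_le_univ (X * S)
    omega

theorem aux_le {H : Type*} [Group H] [Fintype H] [DecidableEq H] (S : Finset H)
    (hS : S ≠ Finset.univ) :
    sInf {n : ℕ | ∃ X : Finset H, MemFam S⁻¹ X ∧ n = (X * S⁻¹).card - X.card} ≤
    sInf {n : ℕ | ∃ X : Finset H, MemFam S X ∧ n = (X * S).card - X.card} := by
  apply le_csInf
  · refine ⟨_, {1}, ⟨by simp, ?_⟩, rfl⟩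
    intro h
    apply hS
    rw [Finset.singleton_mul, one_smul] at h
    exact_mod_cast h
  · rintro n ⟨X, hX, rfl⟩
    obtain ⟨Y, hY, hle⟩ := aux_dual S X hX
    refine le_trans (Nat.sInf_le ?_) hle
    exact ⟨Y, hY, rfl⟩

/-- Let `G` be a finite group and `S` a generating subset of `G` with `1 ∈ S` and
`S ≠ G`. Then the minimum of `|XS| − |X|` over all nonempty `X ⊆ G` with `XS` a
proper subset of `G` equals the corresponding minimum for `S⁻¹`, i.e. `κ(S) = κ(S⁻¹)`. -/
theorem stmt_3 {G : Type*} [Group G] [Fintype G] [DecidableEq G] (S : Finset G)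
    (h1 : (1 : G) ∈ S) (hgen : Subgroup.closure (S : Set G) = ⊤)
    (hS : S ≠ Finset.univ) :
    sInf {n : ℕ | ∃ X : Finset G, MemFam S X ∧ n = (X * S).card - X.card} =
    sInf {n : ℕ | ∃ X : Finset G, MemFam S⁻¹ X ∧ n = (X * S⁻¹).card - X.card} := by
  apply le_antisymm
  · have hS' : S⁻¹ ≠ Finset.univ := by
      intro h
      apply hS
      rw [← inv_inv S, h, Finset.inv_univ]
    have := aux_le S⁻¹ hS'
    rwa [inv_inv] at this
  · exact aux_le S hS
end

section
/- Let G be a group and S a finite generating normal subset of G with 1 ∈ S (normal meaning gSg⁻¹ = S for all g ∈ G). Then any atom H of S containing 1 is (the underlying set of) a normal subgroup of G, and H is also an atom of S⁻¹ containing 1. -/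
open Pointwise

variable {G : Type*} [Group G] [DecidableEq G]

/-- `X` is a fragment of `S`: a member of `F(S)` attaining the minimum of
`|XS| - |X|`. -/
def IsFragment (S X : Finset G) : Prop :=
  MemFam S X ∧ ∀ Y : Finset G, MemFam S Y →
    (X * S).card - X.card ≤ (Y * S).card - Y.card

/-- `X` is an atom of `S`: a fragment of smallest cardinality. -/
def IsAtomOf (S X : Finset G) : Prop :=
  IsFragment S X ∧ ∀ Y : Finset G, IsFragment S Y → X.card ≤ Y.card

theorem aux_memFam {G : Type*} [Group G] [DecidableEq G] (S X : Finset G) :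
    MemFam S X ↔ X.Nonempty ∧ ∃ z, z ∉ X * S := by
  unfold MemFam
  rw [Set.ne_univ_iff_exists_notMem]
  simp only [Finset.mem_coe]

theorem aux_comm {G : Type*} [Group G] [DecidableEq G] (S : Finset G)
    (hn : ∀ g x : G, g * x * g⁻¹ ∈ S ↔ x ∈ S) (X : Finset G) : S * X = X * S := by
  ext z
  simp only [Finset.mem_mul]
  constructor
  · rintro ⟨s, hs, x, hx, rfl⟩
    refine ⟨x, hx, x⁻¹ * s * x, ?_, by group⟩
    have := (hn x⁻¹ s).2 hs
    simpa using this
  · rintro ⟨x, hx, s, hs, rfl⟩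
    exact ⟨x * s * x⁻¹, (hn x s).2 hs, x, hx, by group⟩

theorem aux_le_s9 {G : Type*} [Group G] [DecidableEq G] (S : Finset G) (h1 : (1 : G) ∈ S)
    (X : Finset G) : X.card ≤ (X * S).card :=
  Finset.card_le_card (Finset.subset_mul_left X h1)

theorem aux_transfer {G : Type*} [Group G] [DecidableEq G] (S X Y : Finset G)
    (hX : IsAtomOf S X) (hY : MemFam S Y) (h1 : Y.card = X.card)
    (h2 : (Y * S).card = (X * S).card) : IsAtomOf S Y := by
  refine ⟨⟨hY, ?_⟩, ?_⟩
  · rw [h1, h2]; exact hX.1.2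
  · rw [h1]; exact hX.2

theorem aux_left {G : Type*} [Group G] [DecidableEq G] (S X : Finset G) (g : G)
    (hX : IsAtomOf S X) : IsAtomOf S ({g} * X) := by
  have hm := (aux_memFam S X).1 hX.1.1
  refine aux_transfer S X _ hX ?_ (by simp) (by rw [mul_assoc]; simp)
  rw [aux_memFam]
  obtain ⟨hne, z, hz⟩ := hm
  refine ⟨(Finset.singleton_nonempty g).mul hne, g * z, ?_⟩
  rw [mul_assoc, Finset.mem_mul]
  rintro ⟨a, ha, b, hb, hab⟩
  rw [Finset.mem_singleton] at ha
  subst ha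
  exact hz (mul_left_cancel hab ▸ hb)

theorem aux_right {G : Type*} [Group G] [DecidableEq G] (S X : Finset G) (g : G)
    (hn : ∀ g x : G, g * x * g⁻¹ ∈ S ↔ x ∈ S)
    (hX : IsAtomOf S X) : IsAtomOf S (X * {g}) := by
  have hm := (aux_memFam S X).1 hX.1.1
  have e : X * {g} * S = X * S * {g} := by
    rw [mul_assoc, ← aux_comm S hn {g}, mul_assoc]
  refine aux_transfer S X _ hX ?_ (by simp) (by rw [e]; simp)
  rw [aux_memFam]
  obtain ⟨hne, z, hz⟩ := hm
  refine ⟨hne.mul (Finset.singleton_nonempty g), z * g, ?_⟩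
  rw [e, Finset.mem_mul]
  rintro ⟨b, hb, a, ha, hab⟩
  rw [Finset.mem_singleton] at ha
  subst ha
  exact hz (mul_right_cancel hab ▸ hb)

theorem aux_normal_inv {G : Type*} [Group G] [DecidableEq G] (S : Finset G)
    (hn : ∀ g x : G, g * x * g⁻¹ ∈ S ↔ x ∈ S) :
    ∀ g x : G, g * x * g⁻¹ ∈ S⁻¹ ↔ x ∈ S⁻¹ := by
  intro g x
  rw [Finset.mem_inv', Finset.mem_inv', ← hn g x⁻¹]
  simp [mul_assoc]

theorem aux_inv_mul {G : Type*} [Group G] [DecidableEq G] (S : Finset G)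
    (hn : ∀ g x : G, g * x * g⁻¹ ∈ S ↔ x ∈ S) (X : Finset G) :
    X⁻¹ * S⁻¹ = (X * S)⁻¹ := by
  rw [← aux_comm S hn X, mul_inv_rev]

theorem aux_inv_mem {G : Type*} [Group G] [DecidableEq G] (S : Finset G)
    (hn : ∀ g x : G, g * x * g⁻¹ ∈ S ↔ x ∈ S) (X : Finset G) (h : MemFam S X) :
    MemFam S⁻¹ X⁻¹ := by
  rw [aux_memFam] at h ⊢
  obtain ⟨hne, z, hz⟩ := h
  refine ⟨hne.inv, z⁻¹, ?_⟩
  rw [aux_inv_mul S hn, Finset.mem_inv', inv_inv]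
  exact hz

theorem aux_inv_frag {G : Type*} [Group G] [DecidableEq G] (S : Finset G)
    (hn : ∀ g x : G, g * x * g⁻¹ ∈ S ↔ x ∈ S) (X : Finset G) (h : IsFragment S X) :
    IsFragment S⁻¹ X⁻¹ := by
  refine ⟨aux_inv_mem S hn X h.1, fun Y hY => ?_⟩
  have h2 := aux_inv_mem S⁻¹ (aux_normal_inv S hn) Y hY
  rw [inv_inv] at h2
  have h3 := h.2 _ h2
  have h4 := aux_inv_mul S⁻¹ (aux_normal_inv S hn) Y
  rw [inv_inv] at h4
  rw [h4] at h3
  rw [aux_inv_mul S hn]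
  rw [Finset.card_inv, Finset.card_inv] at h3 ⊢
  exact h3

theorem aux_inv_atom {G : Type*} [Group G] [DecidableEq G] (S : Finset G)
    (hn : ∀ g x : G, g * x * g⁻¹ ∈ S ↔ x ∈ S) (X : Finset G) (h : IsAtomOf S X) :
    IsAtomOf S⁻¹ X⁻¹ := by
  refine ⟨aux_inv_frag S hn X h.1, fun Y hY => ?_⟩
  have h2 := aux_inv_frag S⁻¹ (aux_normal_inv S hn) Y hY
  rw [inv_inv] at h2
  simpa using h.2 _ h2

theorem aux_inter {G : Type*} [Group G] [DecidableEq G] (S : Finset G) (h1 : (1 : G) ∈ S)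
    (hn : ∀ g x : G, g * x * g⁻¹ ∈ S ↔ x ∈ S) (A B : Finset G)
    (hA : IsAtomOf S A) (hB : IsAtomOf S B) (hAB : (A ∩ B).Nonempty) : A = B := by
  by_contra hne
  have cAB : A.card = B.card := le_antisymm (hA.2 _ hB.1) (hB.2 _ hA.1)
  have lt : (A ∩ B).card < A.card := by
    apply Finset.card_lt_card
    refine Finset.ssubset_iff_subset_ne.2 ⟨Finset.inter_subset_left, fun h => hne ?_⟩
    exact Finset.eq_of_subset_of_card_le (Finset.inter_eq_left.1 h) cAB.ge
  have iS : (A ∩ B) * S ⊆ (A * S) ∩ (B * S) := Finset.inter_mul_subset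
  have uS : (A ∪ B) * S = (A * S) ∪ (B * S) := Finset.union_mul
  have c1 := Finset.card_le_card iS
  have c2 := Finset.card_union_add_card_inter (A * S) (B * S)
  have c3 := Finset.card_union_add_card_inter A B
  have lA := aux_le_s9 S h1 A
  have lB := aux_le_s9 S h1 B
  have lI := aux_le_s9 S h1 (A ∩ B)
  have lU := aux_le_s9 S h1 (A ∪ B)
  have mA := (aux_memFam S A).1 hA.1.1
  have mI : MemFam S (A ∩ B) := by
    rw [aux_memFam]
    obtain ⟨_, z, hz⟩ := mA
    exact ⟨hAB, z, fun h => hz (Finset.mem_inter.1 (iS h)).1⟩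
  have kAB : (A * S).card - A.card = (B * S).card - B.card :=
    le_antisymm (hA.1.2 _ hB.1.1) (hB.1.2 _ hA.1.1)
  have kI : (A * S).card - A.card < ((A ∩ B) * S).card - (A ∩ B).card := by
    by_contra hcon
    have : IsFragment S (A ∩ B) := ⟨mI, fun Y hY => (not_lt.1 hcon).trans (hA.1.2 Y hY)⟩
    exact absurd (hA.2 _ this) (not_le.2 lt)
  by_cases mU : MemFam S (A ∪ B)
  · have kU := hA.1.2 _ mU
    rw [uS] at kU lU
    omega
  · have hU : ∀ z, z ∈ (A ∪ B) * S := by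
      by_contra hcon
      push Not at hcon
      exact mU ((aux_memFam _ _).2 ⟨mA.1.mono Finset.subset_union_left, hcon⟩)
    rw [uS] at hU
    set U := A * S ∪ B * S with hUdef
    have lY : (U \ (A * S)).card + (A * S).card = U.card :=
      Finset.card_sdiff_add_card_eq_card Finset.subset_union_left
    have lUA : (U \ A).card + A.card = U.card :=
      Finset.card_sdiff_add_card_eq_card (fun z _ => hU z)
    have ysub : (U \ (A * S)) * S⁻¹ ⊆ U \ A := by
      intro z hz
      obtain ⟨y, hy, t, ht, rfl⟩ := Finset.mem_mul.1 hz
      rw [Finset.mem_sdiff] at hy ⊢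
      refine ⟨hU _, fun hA' => hy.2 ?_⟩
      rw [Finset.mem_inv'] at ht
      have := Finset.mul_mem_mul hA' ht
      simpa using this
    have cy := Finset.card_le_card ysub
    have mY : MemFam S⁻¹ (U \ (A * S)) := by
      rw [aux_memFam]
      obtain ⟨⟨a, ha⟩, z, hz⟩ := mA
      exact ⟨⟨z, Finset.mem_sdiff.2 ⟨hU z, hz⟩⟩, a,
        fun h => (Finset.mem_sdiff.1 (ysub h)).2 ha⟩
    have hA' := aux_inv_atom S hn A hA
    have kA' : (A⁻¹ * S⁻¹).card - A⁻¹.card = (A * S).card - A.card := by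
      rw [aux_inv_mul S hn, Finset.card_inv, Finset.card_inv]
    have fY : IsFragment S⁻¹ (U \ (A * S)) := by
      refine ⟨mY, fun Z hZ => ?_⟩
      have := hA'.1.2 Z hZ
      omega
    have := hA'.2 _ fY
    rw [Finset.card_inv] at this
    omega

/-- Let `G` be a group and `S` a finite generating normal subset of `G` with
`1 ∈ S` (normal: `gSg⁻¹ = S` for all `g`). Then any atom `H` of `S` containing `1`
is the underlying set of a normal subgroup of `G`, and `H` is also an atom of
`S⁻¹` (containing `1`). -/
theorem stmt_9 {G : Type*} [Group G] [DecidableEq G] (S : Finset G)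
    (h1 : (1 : G) ∈ S) (hgen : Subgroup.closure (S : Set G) = ⊤)
    (hnormal : ∀ g x : G, g * x * g⁻¹ ∈ S ↔ x ∈ S)
    (H : Finset G) (hH : IsAtomOf S H) (h1H : (1 : G) ∈ H) :
    (∃ N : Subgroup G, N.Normal ∧ (N : Set G) = (H : Set G)) ∧
    IsAtomOf S⁻¹ H := by
  have key : ∀ B, IsAtomOf S B → (1 : G) ∈ B → B = H := fun B hB h =>
    aux_inter S h1 hnormal B H hB hH ⟨1, Finset.mem_inter.2 ⟨h, h1H⟩⟩
  have tr : ∀ h ∈ H, ({h⁻¹} : Finset G) * H = H := fun h hh =>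
    key _ (aux_left S H _ hH)
      (Finset.mem_mul.2 ⟨h⁻¹, Finset.mem_singleton_self _, h, hh, inv_mul_cancel h⟩)
  have hinv : ∀ h ∈ H, h⁻¹ ∈ H := by
    intro h hh
    rw [← tr h hh]
    exact Finset.mem_mul.2 ⟨h⁻¹, Finset.mem_singleton_self _, 1, h1H, mul_one _⟩
  have hmul : ∀ a ∈ H, ∀ b ∈ H, a * b ∈ H := by
    intro a ha b hb
    rw [← tr a⁻¹ (hinv a ha), inv_inv]
    exact Finset.mem_mul.2 ⟨a, Finset.mem_singleton_self _, b, hb, rfl⟩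
  refine ⟨⟨{ carrier := H, mul_mem' := fun ha hb => hmul _ ha _ hb, one_mem' := h1H,
             inv_mem' := fun ha => hinv _ ha }, ⟨fun n hn g => ?_⟩, rfl⟩, ?_⟩
  · have e : ({g} : Finset G) * H * {g⁻¹} = H := by
      refine key _ (aux_right S _ _ hnormal (aux_left S H _ hH)) ?_
      refine Finset.mem_mul.2 ⟨g * 1, Finset.mul_mem_mul (Finset.mem_singleton_self _) h1H,
        g⁻¹, Finset.mem_singleton_self _, by simp⟩
    change g * n * g⁻¹ ∈ H
    rw [← e]
    exact Finset.mul_mem_mul (Finset.mul_mem_mul (Finset.mem_singleton_self _) hn)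
      (Finset.mem_singleton_self _)
  · have e : H⁻¹ = H := by
      ext z
      rw [Finset.mem_inv']
      exact ⟨fun h => by simpa using hinv _ h, hinv z⟩
    have := aux_inv_atom S hnormal H hH
    rwa [e] at this
end

section
/- Let G be a group and S a finite faithful generating subset of G with 1 ∈ S such that |S⁻¹S| ≤ 2|S| − 2 and S⁻¹S ≠ G. Let H be a basic atom of S (an atom of S containing 1; such an H is a subgroup), and let C be an H-right-component of S of smallest cardinality, i.e. C = S ∩ Hc for some c ∈ S and |C| ≤ |S ∩ Hx| for every x ∈ S. Then for all x, y ∈ S with (x, y) ∉ C × C, one has x⁻¹Hy ⊆ S⁻¹S. -/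
open Pointwise

variable {G : Type*} [Group G] [DecidableEq G]

/-- `S` is faithful: every atom `A` of `S` satisfies `|A| ≤ |∇(A)|`. -/
def IsFaithful (S : Finset G) : Prop :=
  ∀ A : Finset G, IsAtomOf S A → A.card ≤ ((A * S) \ A).card


set_option linter.unusedSectionVars false

section graph
variable {V : Type*} [Fintype V] [DecidableEq V]

/-- number of edges leaving A -/
def ecut (r : V → V → Prop) [DecidableRel r] (A : Finset V) : ℕ :=
  ∑ x : V, ∑ y : V, if (x ∈ A ∧ y ∉ A ∧ r x y) then 1 else 0

def edeg (r : V → V → Prop) [DecidableRel r] (A : Finset V) (x : V) : ℕ :=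
  (A.filter (fun y => r x y)).card

variable (r : V → V → Prop) [DecidableRel r]

lemma ecut_eq (A : Finset V) : ecut r A = ∑ x ∈ A, edeg r Aᶜ x := by
  unfold ecut edeg
  rw [← Finset.sum_filter_add_sum_filter_not Finset.univ (fun x => x ∈ A)]
  have h2 : ∑ x ∈ Finset.univ.filter (fun x => x ∉ A), ∑ y : V, (if (x ∈ A ∧ y ∉ A ∧ r x y) then 1 else 0) = 0 := by
    apply Finset.sum_eq_zero
    intro x hx
    apply Finset.sum_eq_zero
    intro y _
    simp at hx
    simp [hx]
  rw [h2, add_zero]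
  simp only [Finset.filter_mem_eq_inter, Finset.univ_inter]
  apply Finset.sum_congr rfl
  intro x hx
  rw [Finset.card_eq_sum_ones, Finset.sum_filter, ← Finset.sum_filter_add_sum_filter_not Finset.univ (fun y => y ∈ Aᶜ)]
  have h3 : ∑ y ∈ Finset.univ.filter (fun y => y ∉ Aᶜ), (if (x ∈ A ∧ y ∉ A ∧ r x y) then 1 else 0) = 0 := by
    apply Finset.sum_eq_zero
    intro y hy
    simp at hy
    simp [hy]
  rw [h3, add_zero]
  simp only [Finset.filter_mem_eq_inter, Finset.univ_inter]
  apply Finset.sum_congr rfl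
  intro y hy
  simp at hy
  simp [hx, hy]

lemma ecut_compl (hs : ∀ x y, r x y → r y x) (A : Finset V) : ecut r Aᶜ = ecut r A := by
  unfold ecut
  rw [Finset.sum_comm]
  apply Finset.sum_congr rfl; intro x _
  apply Finset.sum_congr rfl; intro y _
  have : r x y ↔ r y x := ⟨hs x y, hs y x⟩
  simp only [Finset.mem_compl, not_not]
  congr 1
  rw [this]; apply propext; tauto

lemma ecut_submod (A B : Finset V) : ecut r (A ∩ B) + ecut r (A ∪ B) ≤ ecut r A + ecut r B := by
  unfold ecut
  simp only [← Finset.sum_add_distrib]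
  apply Finset.sum_le_sum; intro x _
  apply Finset.sum_le_sum; intro y _
  by_cases hr : r x y <;> by_cases h1 : x ∈ A <;> by_cases h2 : x ∈ B <;> by_cases h3 : y ∈ A <;> by_cases h4 : y ∈ B <;> simp [*]

lemma ecut_posmod (hs : ∀ x y, r x y → r y x) (A B : Finset V) :
    ecut r (A \ B) + ecut r (B \ A) ≤ ecut r A + ecut r B := by
  have h := ecut_submod r A Bᶜ
  rw [ecut_compl r hs B] at h
  have e1 : A ∩ Bᶜ = A \ B := by ext; simp
  have e2 : A ∪ Bᶜ = (B \ A)ᶜ := by ext; simp; tauto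
  rwa [e1, e2, ecut_compl r hs] at h

lemma edeg_union (A B : Finset V) (h : Disjoint A B) (x : V) :
    edeg r (A ∪ B) x = edeg r A x + edeg r B x := by
  unfold edeg
  rw [Finset.filter_union, Finset.card_union_of_disjoint]
  exact Finset.disjoint_filter_filter h

lemma edeg_compl (A : Finset V) (x : V) : edeg r A x + edeg r Aᶜ x = edeg r Finset.univ x := by
  rw [← edeg_union r A Aᶜ disjoint_compl_right]; simp

lemma edeg_le_card (A : Finset V) (x : V) : edeg r A x ≤ A.card := Finset.card_filter_le _ _

lemma edeg_lt_card (hi : ∀ x, ¬ r x x) (A : Finset V) (x : V) (hx : x ∈ A) : edeg r A x < A.card := by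
  apply Finset.card_lt_card
  refine ⟨Finset.filter_subset _ _, fun h => ?_⟩
  have := h hx
  simp at this
  exact hi x this.2

/-- parity -/
lemma even_sum_edeg (hs : ∀ x y, r x y → r y x) (hi : ∀ x, ¬ r x x) (A : Finset V) :
    Even (∑ x ∈ A, edeg r A x) := by
  induction A using Finset.induction_on with
  | empty => simp
  | insert a A ha ih =>
    rw [Finset.sum_insert ha]
    have h1 : ∀ x, edeg r (insert a A) x = (if r x a then 1 else 0) + edeg r A x := by
      intro x
      unfold edeg
      rw [Finset.filter_insert]
      split_ifs with h
      · rw [Finset.card_insert_of_notMem (by simp [ha])]; ring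
      · simp
    simp only [h1]
    rw [Finset.sum_add_distrib, if_neg (hi a), zero_add]
    have h2 : ∑ x ∈ A, (if r x a then 1 else 0) = edeg r A a := by
      unfold edeg
      rw [Finset.card_eq_sum_ones, Finset.sum_filter]
      apply Finset.sum_congr rfl
      intro x _
      have : r x a ↔ r a x := ⟨hs _ _, hs _ _⟩
      simp [this]
    rw [h2, ← add_assoc]
    exact Even.add ⟨_, rfl⟩ ih

/-- automorphism -/
def IsAut (σ : Equiv.Perm V) : Prop := ∀ a b, r (σ a) (σ b) ↔ r a b

lemma ecut_map (σ : Equiv.Perm V) (h : IsAut r σ) (A : Finset V) :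
    ecut r (A.map σ.toEmbedding) = ecut r A := by
  unfold ecut
  rw [← Equiv.sum_comp σ]
  apply Finset.sum_congr rfl; intro x _
  rw [← Equiv.sum_comp σ]
  apply Finset.sum_congr rfl; intro y _
  have := h x y
  simp [this]

lemma edeg_map (σ : Equiv.Perm V) (h : IsAut r σ) (A : Finset V) (x : V) :
    edeg r (A.map σ.toEmbedding) (σ x) = edeg r A x := by
  unfold edeg
  rw [Finset.filter_map, Finset.card_map]
  congr 1
  ext y
  have := h x y
  simp [this]

open Classical in
noncomputable def comp (v : V) : Finset V := Finset.univ.filter (fun u => Relation.ReflTransGen r v u)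

lemma mem_comp (v u : V) : u ∈ comp r v ↔ Relation.ReflTransGen r v u := by
  unfold comp; simp

lemma rtg_symm (hs : ∀ x y, r x y → r y x) {x y : V} (h : Relation.ReflTransGen r x y) :
    Relation.ReflTransGen r y x := by
  induction h with
  | refl => exact .refl
  | tail _ hbc ih => exact .head (hs _ _ hbc) ih

lemma comp_eq (hs : ∀ x y, r x y → r y x) {v u : V} (h : u ∈ comp r v) : comp r u = comp r v := by
  rw [mem_comp] at h
  ext w
  simp only [mem_comp]
  exact ⟨fun k => h.trans k, fun k => (rtg_symm r hs h).trans k⟩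

lemma self_mem_comp (v : V) : v ∈ comp r v := by rw [mem_comp]

lemma comp_map (σ : Equiv.Perm V) (h : IsAut r σ) (v : V) :
    (comp r v).map σ.toEmbedding = comp r (σ v) := by
  have key : ∀ (τ : Equiv.Perm V), IsAut r τ → ∀ a b, Relation.ReflTransGen r a b →
      Relation.ReflTransGen r (τ a) (τ b) := by
    intro τ hτ a b hab
    exact Relation.ReflTransGen.lift τ (fun a b k => (hτ a b).2 k) a b hab
  have hinv : IsAut r σ.symm := by
    intro a b
    have := h (σ.symm a) (σ.symm b)
    simpa using this.symm
  ext w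
  simp only [Finset.mem_map_equiv, mem_comp]
  constructor
  · intro k
    have := key σ h _ _ k
    simpa using this
  · intro k
    have := key _ hinv _ _ k
    simpa using this

/-- a subset of a component with zero cut is everything -/
lemma comp_of_ecut_zero (v : V) (Z : Finset V) (hv : v ∈ Z) (h0 : ecut r Z = 0) : comp r v ⊆ Z := by
  intro w hw
  rw [mem_comp] at hw
  induction hw with
  | refl => exact hv
  | @tail b c _ hbc ih =>
    by_contra hc
    unfold ecut at h0
    rw [Finset.sum_eq_zero_iff] at h0
    have := h0 b (Finset.mem_univ _)
    rw [Finset.sum_eq_zero_iff] at this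
    have := this c (Finset.mem_univ _)
    simp [ih, hc, hbc] at this

/-- closed sets have cardinality divisible by the component size -/
lemma dvd_closed (hs : ∀ x y, r x y → r y x) (q : ℕ) (hq : ∀ v, (comp r v).card = q) (A : Finset V)
    (hA : ∀ v ∈ A, comp r v ⊆ A) : q ∣ A.card := by
  induction A using Finset.strongInduction with
  | H A ih =>
    rcases A.eq_empty_or_nonempty with rfl | ⟨v, hv⟩
    · simp
    have hsub := hA v hv
    have : q ∣ (A \ comp r v).card := by
      apply ih
      · refine ⟨Finset.sdiff_subset, fun h => ?_⟩
        have := h hv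
        simp [self_mem_comp] at this
      · intro u hu w hw
        simp only [Finset.mem_sdiff] at hu ⊢
        refine ⟨hA u hu.1 hw, fun hwv => hu.2 ?_⟩
        have e1 := comp_eq r hs hw
        have e2 := comp_eq r hs hwv
        rw [← e2, e1]; exact self_mem_comp r u
    have e : A.card = (A \ comp r v).card + (comp r v).card := by
      rw [Finset.card_sdiff_add_card_eq_card hsub]
    rw [e, hq v]
    exact (Nat.dvd_add_right this).2 dvd_rfl

/-- cut restricted to a component -/
lemma ecut_comp_sdiff (hs : ∀ x y, r x y → r y x) (v : V) (Z : Finset V) (hZ : Z ⊆ comp r v) :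
    ecut r (comp r v \ Z) = ecut r Z := by
  have key : ∀ Z : Finset V, Z ⊆ comp r v → ecut r Z = ∑ x ∈ Z, edeg r (comp r v \ Z) x := by
    intro Z hZ
    rw [ecut_eq]
    apply Finset.sum_congr rfl
    intro x hx
    unfold edeg
    congr 1
    ext y
    simp only [Finset.mem_filter, Finset.mem_compl, Finset.mem_sdiff]
    constructor
    · rintro ⟨h1, h2⟩
      refine ⟨⟨?_, h1⟩, h2⟩
      have := hZ hx
      rw [mem_comp] at this ⊢
      exact this.tail h2
    · rintro ⟨⟨_, h1⟩, h2⟩; exact ⟨h1, h2⟩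
  rw [key _ Finset.sdiff_subset, key _ hZ, Finset.sdiff_sdiff_eq_self hZ]
  unfold edeg
  simp only [Finset.card_eq_sum_ones, Finset.sum_filter]
  rw [Finset.sum_comm]
  apply Finset.sum_congr rfl; intro x _
  apply Finset.sum_congr rfl; intro y _
  have : r x y ↔ r y x := ⟨hs x y, hs y x⟩
  simp [this]

end graph

section graph2
variable {V : Type*} [Fintype V] [DecidableEq V]
variable (r : V → V → Prop) [DecidableRel r]

lemma IsAut.trans' {σ τ : Equiv.Perm V} (h : IsAut r σ) (k : IsAut r τ) : IsAut r (σ.trans τ) := by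
  intro a b
  simp only [Equiv.trans_apply]
  rw [k, h]

lemma IsAut.symm' {σ : Equiv.Perm V} (h : IsAut r σ) : IsAut r σ.symm := by
  intro a b
  have := h (σ.symm a) (σ.symm b)
  simpa using this.symm

/-- parity obstruction from a block with exactly one outgoing edge at each vertex -/
lemma one_reg_false (hs : ∀ x y, r x y → r y x) (hi : ∀ x, ¬ r x x)
    (hodd : Odd (Fintype.card V)) (h1 : ∀ x, edeg r Finset.univ x = 1) : False := by
  have h := even_sum_edeg r hs hi Finset.univ
  simp only [h1] at h
  simp at h
  exact (Nat.not_even_iff_odd.2 hodd) h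

lemma nt_block (hs : ∀ x y, r x y → r y x) (hi : ∀ x, ¬ r x x) (J : ℕ)
    (hreg : ∀ x, edeg r Finset.univ x = J)
    (htr : ∀ u v, ∃ σ : Equiv.Perm V, IsAut r σ ∧ σ u = v)
    (hodd : Odd (Fintype.card V)) (v : V) (Z : Finset V) (hZ : Z ⊆ comp r v)
    (h3 : 3 ≤ Z.card) (hlt : Z.card < (comp r v).card)
    (hblock : ∀ σ : Equiv.Perm V, IsAut r σ → (Z ∩ Z.map σ.toEmbedding).Nonempty →
      Z.map σ.toEmbedding = Z) : 2 * J ≤ ecut r Z + 2 := by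
  classical
  obtain ⟨z0, hz0⟩ : Z.Nonempty := Finset.card_pos.1 (by omega)
  set k := edeg r Z z0 with hk
  have hdeg : ∀ z ∈ Z, edeg r Z z = k := by
    intro z hz
    obtain ⟨σ, hσ, rfl⟩ := htr z0 z
    have e := hblock σ hσ ⟨σ z0, by simp [hz, hz0]⟩
    have := edeg_map r σ hσ Z z0
    rw [e] at this
    exact this
  have hkl : k < Z.card := edeg_lt_card r hi Z z0 hz0
  have hkJ : k ≤ J := by
    have := edeg_compl r Z z0
    rw [hreg] at this; omega
  obtain ⟨ρ, hρ⟩ : ∃ ρ, J = k + ρ := ⟨J - k, by omega⟩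
  have hext : ∀ z ∈ Z, edeg r Zᶜ z = ρ := by
    intro z hz
    have := edeg_compl r Z z
    rw [hreg, hdeg z hz] at this; omega
  have hcut : ecut r Z = Z.card * ρ := by
    rw [ecut_eq, Finset.sum_congr rfl hext]; simp
  rcases Nat.lt_or_ge ρ 2 with hρ2 | hρ2
  · exfalso
    interval_cases ρ
    · have := comp_of_ecut_zero r z0 Z hz0 (by simpa using hcut)
      rw [comp_eq r hs (hZ hz0)] at this
      have := Finset.card_le_card this
      omega
    · have hb2 : ∀ σ τ : Equiv.Perm V, IsAut r σ → IsAut r τ → ∀ u, u ∈ Z.map σ.toEmbedding →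
          u ∈ Z.map τ.toEmbedding → Z.map σ.toEmbedding = Z.map τ.toEmbedding := by
        intro σ τ hσ hτ u hu1 hu2
        have e := hblock (τ.trans σ.symm) (hτ.trans' r (hσ.symm' r)) ⟨σ.symm u, by
          simp only [Finset.mem_inter, Finset.mem_map_equiv] at hu1 hu2 ⊢
          refine ⟨hu1, ?_⟩
          simpa using hu2⟩
        ext w
        have := Finset.ext_iff.1 e (σ.symm w)
        simp only [Finset.mem_map_equiv, Equiv.symm_trans_apply, Equiv.symm_symm, Equiv.apply_symm_apply] at this ⊢
        exact this.symm
      let r' : V → V → Prop := fun a b => r a b ∧ ¬ ∃ σ : Equiv.Perm V, IsAut r σ ∧ a ∈ Z.map σ.toEmbedding ∧ b ∈ Z.map σ.toEmbedding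
      apply one_reg_false r' (fun x y h => ⟨hs _ _ h.1, fun ⟨σ, h1, h2, h3⟩ => h.2 ⟨σ, h1, h3, h2⟩⟩) (fun x h => hi x h.1) hodd
      intro x
      obtain ⟨σ, hσ, rfl⟩ := htr z0 x
      have hx : σ z0 ∈ Z.map σ.toEmbedding := by simp [hz0]
      have e1 : edeg r' Finset.univ (σ z0) = edeg r (Z.map σ.toEmbedding)ᶜ (σ z0) := by
        unfold edeg
        congr 1
        ext y
        simp only [Finset.mem_filter, Finset.mem_univ, true_and, Finset.mem_compl, r']
        constructor
        · rintro ⟨h1, h2⟩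
          exact ⟨fun hy => h2 ⟨σ, hσ, hx, hy⟩, h1⟩
        · rintro ⟨h1, h2⟩
          refine ⟨h2, ?_⟩
          rintro ⟨τ, hτ, k1, k2⟩
          rw [← hb2 σ τ hσ hτ _ hx k1] at k2
          exact h1 k2
      rw [e1]
      have e2 := edeg_compl r (Z.map σ.toEmbedding) (σ z0)
      rw [hreg, edeg_map r σ hσ] at e2
      omega
  · rw [hcut, hρ]
    rcases Nat.eq_zero_or_pos k with h0 | h0
    · rw [h0]; nlinarith
    · obtain ⟨ρ', rfl⟩ : ∃ ρ', ρ = ρ' + 2 := ⟨ρ - 2, by omega⟩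
      obtain ⟨k', hk'⟩ : ∃ k', k = k' + 1 := ⟨k - 1, by omega⟩
      rw [hk'] at hkl ⊢
      have : (k' + 2) * (ρ' + 2) ≤ Z.card * (ρ' + 2) := Nat.mul_le_mul_right _ (by omega)
      nlinarith [Nat.zero_le (k' * ρ')]

lemma nt (hs : ∀ x y, r x y → r y x) (hi : ∀ x, ¬ r x x) (J : ℕ)
    (hreg : ∀ x, edeg r Finset.univ x = J)
    (htr : ∀ u v, ∃ σ : Equiv.Perm V, IsAut r σ ∧ σ u = v)
    (hodd : Odd (Fintype.card V)) (v : V) (Z : Finset V) (hZ : Z ⊆ comp r v)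
    (h2 : 2 ≤ Z.card) (h3 : Z.card + 2 ≤ (comp r v).card) : 2 * J ≤ ecut r Z + 2 := by
  classical
  let P : Finset V → Prop := fun Z => Z ⊆ comp r v ∧ 2 ≤ Z.card ∧ Z.card + 2 ≤ (comp r v).card
  obtain ⟨Z0, hZ0, hmin⟩ := Finset.exists_min_image (Finset.univ.filter P)
    (fun Z => ecut r Z * (Fintype.card V + 1) + Z.card) ⟨Z, by simp [P, hZ, h2, h3]⟩
  simp only [Finset.mem_filter, Finset.mem_univ, true_and] at hZ0 hmin
  have m1 : ∀ Y, P Y → ecut r Z0 ≤ ecut r Y := by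
    intro Y hY
    have := hmin Y hY
    have c1 := Finset.card_le_univ Y
    by_contra hc
    push Not at hc
    have : (ecut r Y + 1) * (Fintype.card V + 1) ≤ ecut r Z0 * (Fintype.card V + 1) := Nat.mul_le_mul_right _ hc
    nlinarith
  have m2 : ∀ Y, P Y → Y.card < Z0.card → ecut r Z0 < ecut r Y := by
    intro Y hY hlt
    have := hmin Y hY
    rcases (m1 Y hY).lt_or_eq with h | h
    · exact h
    · rw [h] at this; omega
  suffices h : 2 * J ≤ ecut r Z0 + 2 by
    have := m1 Z ⟨hZ, h2, h3⟩; omega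
  obtain ⟨hs0, hc2, hc3⟩ := hZ0
  have hhalf : 2 * Z0.card ≤ (comp r v).card := by
    by_contra hc
    have hcd : (comp r v \ Z0).card = (comp r v).card - Z0.card := Finset.card_sdiff_of_subset hs0
    have := m2 (comp r v \ Z0) ⟨Finset.sdiff_subset, by omega, by omega⟩ (by omega)
    rw [ecut_comp_sdiff r hs v Z0 hs0] at this
    omega
  rcases Nat.lt_or_ge Z0.card 3 with hl | hl
  · have hc : Z0.card = 2 := by omega
    have : ∑ x ∈ Z0, J ≤ ∑ x ∈ Z0, (edeg r Z0ᶜ x + 1) := by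
      apply Finset.sum_le_sum
      intro x hx
      have e1 := edeg_compl r Z0 x
      have e2 := edeg_lt_card r hi Z0 x hx
      rw [hreg] at e1
      omega
    rw [Finset.sum_add_distrib, ← ecut_eq] at this
    simp [hc] at this
    exact this
  · apply nt_block r hs hi J hreg htr hodd v Z0 hs0 hl (by omega)
    intro σ hσ hne
    by_contra hneq
    set Z1 := Z0.map σ.toEmbedding with hZ1
    have hc1 : Z1.card = Z0.card := Finset.card_map _
    have hcut1 : ecut r Z1 = ecut r Z0 := ecut_map r σ hσ Z0
    have hsub1 : Z1 ⊆ comp r v := by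
      obtain ⟨u, hu⟩ := hne
      simp only [Finset.mem_inter, hZ1, Finset.mem_map] at hu
      obtain ⟨hu0, z, hz, hzu⟩ := hu
      have e1 := comp_eq r hs (hs0 hu0)
      have e2 := comp_eq r hs (hs0 hz)
      have e3 := comp_map r σ hσ z
      rw [e2] at e3
      have : σ z = u := hzu
      rw [this, e1] at e3
      rw [← e3]
      exact Finset.map_subset_map.2 hs0
    have hint_lt : (Z0 ∩ Z1).card < Z0.card := by
      apply Finset.card_lt_card
      refine ⟨Finset.inter_subset_left, fun h => hneq ?_⟩
      have : Z0 ⊆ Z1 := fun x hx => (Finset.mem_inter.1 (h hx)).2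
      exact (Finset.eq_of_subset_of_card_le this hc1.le).symm
    have hui := Finset.card_union_add_card_inter Z0 Z1
    have hpos := Finset.card_pos.2 hne
    rcases Nat.lt_or_ge (Z0 ∩ Z1).card 2 with hi2 | hi2
    · have d1 := Finset.card_sdiff_add_card_inter Z0 Z1
      have d2 := Finset.card_sdiff_add_card_inter Z1 Z0
      rw [Finset.inter_comm] at d2
      have a1 := m2 (Z0 \ Z1) ⟨Finset.sdiff_subset.trans hs0, by omega, by omega⟩ (by omega)
      have a2 := m2 (Z1 \ Z0) ⟨Finset.sdiff_subset.trans hsub1, by omega, by omega⟩ (by omega)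
      have := ecut_posmod r hs Z0 Z1
      omega
    · have a1 := m2 (Z0 ∩ Z1) ⟨Finset.inter_subset_left.trans hs0, hi2, by omega⟩ hint_lt
      have a2 := m1 (Z0 ∪ Z1) ⟨Finset.union_subset hs0 hsub1, by omega, by omega⟩
      have := ecut_submod r Z0 Z1
      omega
end graph2

section graph3
variable {V : Type*} [Fintype V] [DecidableEq V]
variable (r : V → V → Prop) [DecidableRel r]

lemma ecut_inter_comp (v : V) (W : Finset V) : ecut r (W ∩ comp r v) ≤ ecut r W := by
  unfold ecut
  apply Finset.sum_le_sum; intro x _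
  apply Finset.sum_le_sum; intro y _
  by_cases h : x ∈ W ∩ comp r v ∧ y ∉ W ∩ comp r v ∧ r x y
  · rw [if_pos h, if_pos]
    obtain ⟨h1, h2, h3⟩ := h
    rw [Finset.mem_inter] at h1 h2
    refine ⟨h1.1, fun hy => h2 ⟨hy, ?_⟩, h3⟩
    have := h1.2
    rw [mem_comp] at this ⊢
    exact this.tail h3
  · rw [if_neg h]; exact Nat.zero_le _

lemma ecut_inter_comp2 (hs : ∀ x y, r x y → r y x) (v u : V) (hvu : comp r v ≠ comp r u) (W : Finset V) :
    ecut r (W ∩ comp r v) + ecut r (W ∩ comp r u) ≤ ecut r W := by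
  unfold ecut
  simp only [← Finset.sum_add_distrib]
  have key : ∀ v x y, x ∈ W ∩ comp r v ∧ y ∉ W ∩ comp r v ∧ r x y → x ∈ W ∧ y ∉ W ∧ r x y := by
    intro v x y h
    obtain ⟨h1, h2, h3⟩ := h
    rw [Finset.mem_inter] at h1 h2
    refine ⟨h1.1, fun hy => h2 ⟨hy, ?_⟩, h3⟩
    have := h1.2
    rw [mem_comp] at this ⊢
    exact this.tail h3
  apply Finset.sum_le_sum; intro x _
  apply Finset.sum_le_sum; intro y _
  by_cases h : x ∈ W ∩ comp r v ∧ y ∉ W ∩ comp r v ∧ r x y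
  · by_cases h' : x ∈ W ∩ comp r u ∧ y ∉ W ∩ comp r u ∧ r x y
    · exfalso
      apply hvu
      rw [← comp_eq r hs (Finset.mem_inter.1 h.1).2, ← comp_eq r hs (Finset.mem_inter.1 h'.1).2]
    · rw [if_pos h, if_neg h', if_pos (key _ _ _ h)]
  · rw [if_neg h]
    by_cases h' : x ∈ W ∩ comp r u ∧ y ∉ W ∩ comp r u ∧ r x y
    · rw [if_pos h', if_pos (key _ _ _ h')]
    · rw [if_neg h']; exact Nat.zero_le _

lemma ecut_singleton (hi : ∀ x, ¬ r x x) (x : V) : ecut r {x} = edeg r Finset.univ x := by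
  rw [ecut_eq, Finset.sum_singleton, ← edeg_compl r {x}]
  have := edeg_lt_card r hi {x} x (by simp)
  simp at this
  omega

lemma graph_main (hs : ∀ x y, r x y → r y x) (hi : ∀ x, ¬ r x x) (J c : ℕ)
    (hreg : ∀ x, edeg r Finset.univ x = J)
    (htr : ∀ u v, ∃ σ : Equiv.Perm V, IsAut r σ ∧ σ u = v)
    (hV : Fintype.card V = 2 * c + 1) (W : Finset V) (hW : W.card = c) :
    2 * J ≤ ecut r W + 2 := by
  classical
  have hodd : Odd (Fintype.card V) := ⟨c, hV⟩
  obtain ⟨v0⟩ : Nonempty V := Fintype.card_pos_iff.1 (by omega)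
  set q := (comp r v0).card with hq
  have hcq : ∀ v, (comp r v).card = q := by
    intro v
    obtain ⟨σ, hσ, rfl⟩ := htr v0 v
    rw [← comp_map r σ hσ, Finset.card_map]
  have hJq : J + 1 ≤ q := by
    rw [← hreg v0]
    have := edeg_lt_card r hi (comp r v0) v0 (self_mem_comp r v0)
    have e : edeg r Finset.univ v0 = edeg r (comp r v0) v0 := by
      unfold edeg
      congr 1
      ext y
      simp only [Finset.mem_filter, Finset.mem_univ, true_and, mem_comp]
      exact ⟨fun h => ⟨.single h, h⟩, fun h => h.2⟩
    omega
  have hqV : q ∣ 2 * c + 1 := by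
    have := dvd_closed r hs q hcq Finset.univ (fun _ _ => Finset.subset_univ _)
    rwa [Finset.card_univ, hV] at this
  have hwle : ∀ v, (W ∩ comp r v).card ≤ q := fun v => by
    rw [← hcq v]; exact Finset.card_le_card Finset.inter_subset_right
  by_cases hA : ∃ v, 2 ≤ (W ∩ comp r v).card ∧ (W ∩ comp r v).card + 2 ≤ q
  · obtain ⟨v, h1, h2⟩ := hA
    have := nt r hs hi J hreg htr hodd v (W ∩ comp r v) Finset.inter_subset_right h1 (by rwa [hcq])
    have := ecut_inter_comp r v W
    omega
  push Not at hA
  have hJcut : ∀ v, 0 < (W ∩ comp r v).card → (W ∩ comp r v).card < q → J ≤ ecut r (W ∩ comp r v) := by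
    intro v h1 h2
    rcases Nat.lt_or_ge (W ∩ comp r v).card 2 with h | h
    · obtain ⟨x, hx⟩ := Finset.card_eq_one.1 (show (W ∩ comp r v).card = 1 by omega)
      rw [hx, ecut_singleton r hi, hreg]
    · have := hA v h
      rw [← ecut_comp_sdiff r hs v _ Finset.inter_subset_right]
      have hcd : (comp r v \ (W ∩ comp r v)).card = (comp r v).card - (W ∩ comp r v).card :=
        Finset.card_sdiff_of_subset Finset.inter_subset_right
      rw [hcq] at hcd
      obtain ⟨x, hx⟩ := Finset.card_eq_one.1 (show (comp r v \ (W ∩ comp r v)).card = 1 by omega)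
      rw [hx, ecut_singleton r hi, hreg]
  have hfull : ∀ v ∈ W, ¬ (0 < (W ∩ comp r v).card ∧ (W ∩ comp r v).card < q) → comp r v ⊆ W := by
    intro v hv h
    have hp : 0 < (W ∩ comp r v).card := Finset.card_pos.2 ⟨v, by simp [hv, self_mem_comp]⟩
    have : q ≤ (W ∩ comp r v).card := by
      by_contra hc; exact h ⟨hp, by omega⟩
    have := Finset.eq_of_subset_of_card_le (Finset.inter_subset_right : W ∩ comp r v ⊆ comp r v) (by rw [hcq]; exact this)
    rw [← this]; exact Finset.inter_subset_left
  by_cases hB : ∃ v, 0 < (W ∩ comp r v).card ∧ (W ∩ comp r v).card < q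
  · obtain ⟨v, h1, h2⟩ := hB
    by_cases hB2 : ∃ u, comp r v ≠ comp r u ∧ 0 < (W ∩ comp r u).card ∧ (W ∩ comp r u).card < q
    · obtain ⟨u, hvu, h3, h4⟩ := hB2
      have := ecut_inter_comp2 r hs v u hvu W
      have := hJcut v h1 h2
      have := hJcut u h3 h4
      omega
    · have hcl : q ∣ (W \ comp r v).card := by
        apply dvd_closed r hs q hcq
        intro u hu w hw
        rw [Finset.mem_sdiff] at hu
        have hne : comp r v ≠ comp r u := fun h => hu.2 (h ▸ self_mem_comp r u)
        have := hfull u hu.1 (fun h => hB2 ⟨u, hne, h⟩) hw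
        rw [Finset.mem_sdiff]
        refine ⟨this, fun hwv => hne ?_⟩
        rw [← comp_eq r hs hwv, ← comp_eq r hs hw]
      have hsum := Finset.card_sdiff_add_card_inter W (comp r v)
      set w := (W ∩ comp r v).card with hw
      have hd : q ∣ 2 * w + 1 := by
        have e : 2 * c + 1 = 2 * (W \ comp r v).card + (2 * w + 1) := by omega
        rw [e] at hqV
        exact (Nat.dvd_add_right (Dvd.dvd.mul_left hcl 2)).1 hqV
      have c1 := hJcut v h1 h2
      have c2 := ecut_inter_comp r v W
      have hJ2 : J ≤ 2 := by
        rcases Nat.lt_or_ge w 2 with h | h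
        · have : w = 1 := by omega
          rw [this] at hd
          have := Nat.le_of_dvd (by norm_num) hd
          omega
        · have := hA v h
          have e : 2 * q = (2 * w + 1) + 1 := by omega
          have : q ∣ 1 := (Nat.dvd_add_right hd).1 (e ▸ Dvd.intro_left 2 rfl)
          have := Nat.le_of_dvd (by norm_num) this
          omega
      omega
  · have hcl : q ∣ W.card := by
      apply dvd_closed r hs q hcq
      intro u hu
      exact hfull u hu (fun h => hB ⟨u, h⟩)
    rw [hW] at hcl
    have : q ∣ 1 := (Nat.dvd_add_right (Dvd.dvd.mul_left hcl 2)).1 hqV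
    have := Nat.le_of_dvd (by norm_num) this
    omega
end graph3


lemma sub_of_block (X : Finset G) (h1 : (1 : G) ∈ X)
    (hb : ∀ g : G, (g • X ∩ X).Nonempty → g • X = X) : ∃ K : Subgroup G, ∀ g, g ∈ K ↔ g ∈ X := by
  have key : ∀ h ∈ X, h • X = X := by
    intro h hh
    refine hb h ⟨h, ?_⟩
    rw [Finset.mem_inter]
    refine ⟨?_, hh⟩
    rw [Finset.mem_smul_finset]
    exact ⟨1, h1, by simp⟩
  refine ⟨{ carrier := X, mul_mem' := ?_, one_mem' := h1, inv_mem' := ?_ }, fun g => Iff.rfl⟩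
  · intro a b ha hb'
    have ha' : a ∈ X := ha
    have hb'' : b ∈ X := hb'
    have := key a ha'
    show a * b ∈ (X : Set G)
    rw [Finset.mem_coe, ← this, Finset.mem_smul_finset]
    exact ⟨b, hb'', rfl⟩
  · intro a ha
    have ha' : a ∈ X := ha
    have := key a ha'
    have h1' := h1
    rw [← this, Finset.mem_smul_finset] at h1'
    obtain ⟨b, hb1, hb2⟩ := h1'
    show a⁻¹ ∈ (X : Set G)
    have : a⁻¹ = b := by
      rw [smul_eq_mul] at hb2
      exact inv_eq_of_mul_eq_one_right hb2
    rw [this]; exact hb1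

lemma subset_mul_one' (S X : Finset G) (h1 : (1 : G) ∈ S) : X ⊆ X * S := by
  intro x hx
  rw [Finset.mem_mul]
  exact ⟨x, hx, 1, h1, by simp⟩

lemma fam_mono (S X Y : Finset G) (hX : X.Nonempty) (hXY : X ⊆ Y) (hY : MemFam S Y) : MemFam S X := by
  refine ⟨hX, fun h => hY.2 ?_⟩
  have : X * S ⊆ Y * S := Finset.mul_subset_mul_right hXY
  rw [Set.eq_univ_iff_forall] at h ⊢
  intro x
  exact this (h x)

/-- numerical properties of the atom -/
lemma atom_props (S : Finset G) (h1 : (1 : G) ∈ S) (H : Finset G) (hH : IsAtomOf S H) :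
    ∃ κ : ℕ, (H * S).card = H.card + κ ∧ (∀ Y, MemFam S Y → Y.card + κ ≤ (Y * S).card) ∧
      (∀ Y, MemFam S Y → (Y * S).card ≤ Y.card + κ → H.card ≤ Y.card) := by
  have hle : ∀ Y : Finset G, Y.card ≤ (Y * S).card := fun Y => Finset.card_le_card (subset_mul_one' S Y h1)
  refine ⟨(H * S).card - H.card, ?_, ?_, ?_⟩
  · have := hle H; omega
  · intro Y hY
    have := hH.1.2 Y hY
    have := hle Y
    omega
  · intro Y hY hYc
    apply hH.2
    refine ⟨hY, fun Z hZ => ?_⟩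
    have := hH.1.2 Z hZ
    omega

lemma good_block (S : Finset G) (H : Finset G) (hF : MemFam S H) (κ : ℕ)
    (hHS : (H * S).card = H.card + κ) (A1 : ∀ Y, MemFam S Y → Y.card + κ ≤ (Y * S).card)
    (A2 : ∀ Y, MemFam S Y → (Y * S).card ≤ Y.card + κ → H.card ≤ Y.card)
    (hgood : ∀ T : Finset G, (T : Set G) = Set.univ → H.card + (H.card + κ) ≤ T.card) :
    ∀ g : G, (g • H ∩ H).Nonempty → g • H = H := by
  intro g hne
  by_contra hneq
  have hc : (g • H).card = H.card := Finset.card_smul_finset _ _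
  have hlt : (g • H ∩ H).card < H.card := by
    apply Finset.card_lt_card
    refine ⟨Finset.inter_subset_right, fun h => hneq ?_⟩
    have : H ⊆ g • H := fun x hx => (Finset.mem_inter.1 (h hx)).1
    exact (Finset.eq_of_subset_of_card_le this hc.le).symm
  have hI : MemFam S (g • H ∩ H) := fam_mono S _ H hne Finset.inter_subset_right hF
  have b1 : (g • H ∩ H).card + κ < ((g • H ∩ H) * S).card := by
    by_contra hh
    have := A2 _ hI (by omega)
    omega
  have e1 : (g • H ∩ H) * S ⊆ (g • H * S) ∩ (H * S) :=
    Finset.subset_inter (Finset.mul_subset_mul_right Finset.inter_subset_left)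
      (Finset.mul_subset_mul_right Finset.inter_subset_right)
  have e2 : (g • H ∪ H) * S = (g • H * S) ∪ (H * S) := Finset.union_mul
  have e3 : (g • H * S).card = (H * S).card := by
    rw [smul_mul_assoc, Finset.card_smul_finset]
  have c1 := Finset.card_le_card e1
  have c2 := Finset.card_union_add_card_inter (g • H * S) (H * S)
  have c3 := Finset.card_union_add_card_inter (g • H) H
  rw [← e2] at c2
  by_cases hu : (↑((g • H ∪ H) * S) : Set G) = Set.univ
  · have := hgood _ hu
    omega
  · have := A1 _ ⟨hne.mono (Finset.inter_subset_right.trans Finset.subset_union_right), hu⟩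
    omega

lemma good_case (S : Finset G) 
    (H : Finset G) (hS : (H * S).card + 2 ≤ H.card + S.card)
    (K : Subgroup G) (hK : ∀ g, g ∈ K ↔ g ∈ H)
    (C : Finset G) (hC : ∃ c ∈ S, C = S ∩ (H * {c}))
    (hCmin : ∀ x ∈ S, C.card ≤ (S ∩ (H * {x})).card) :
    ∀ x ∈ S, ∀ y ∈ S, ¬(x ∈ C ∧ y ∈ C) →
      ({x⁻¹} * H * {y} : Finset G) ⊆ S⁻¹ * S := by
  have hmem : ∀ x g, g ∈ H * ({x} : Finset G) ↔ g * x⁻¹ ∈ K := by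
    intro x g
    rw [Finset.mem_mul]
    constructor
    · rintro ⟨h, hh, y, hy, rfl⟩
      rw [Finset.mem_singleton] at hy
      subst hy
      rw [mul_inv_cancel_right, hK]; exact hh
    · intro h
      exact ⟨g * x⁻¹, (hK _).1 h, x, by simp, by simp⟩
  have hcardx : ∀ x : G, (H * ({x} : Finset G)).card = H.card := by
    intro x; simp
  have hsubS : S ⊆ H * S := by
    intro s hs
    rw [Finset.mem_mul]
    exact ⟨1, (hK 1).1 K.one_mem, s, hs, by simp⟩
  have hsubx : ∀ x ∈ S, H * {x} ⊆ H * S := fun x hx =>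
    Finset.mul_subset_mul_left (by simpa using hx)
  have two : ∀ x ∈ S, ∀ y ∈ S, y * x⁻¹ ∉ K → H.card + 2 ≤ (S ∩ (H * {x})).card + (S ∩ (H * {y})).card := by
    intro x hx y hy hxy
    have hdis : Disjoint (H * ({x} : Finset G)) (H * {y}) := by
      rw [Finset.disjoint_left]
      intro g h1 h2
      rw [hmem] at h1 h2
      apply hxy
      have := K.mul_mem (K.inv_mem h2) h1
      simpa [mul_assoc] using this
    have hsub : (H * ({x} : Finset G)) ∪ (H * {y}) ∪ S ⊆ H * S :=
      Finset.union_subset (Finset.union_subset (hsubx x hx) (hsubx y hy)) hsubS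
    have c1 := Finset.card_le_card hsub
    have c2 := Finset.card_union_add_card_inter ((H * ({x} : Finset G)) ∪ (H * {y})) S
    have c3 := Finset.card_union_of_disjoint hdis
    rw [hcardx, hcardx] at c3
    have c4 : (((H * ({x} : Finset G)) ∪ (H * {y})) ∩ S).card ≤ (S ∩ (H * {x})).card + (S ∩ (H * {y})).card := by
      rw [Finset.inter_comm, Finset.inter_union_distrib_left]
      exact Finset.card_union_le _ _
    omega
  intro x hx y hy hxy
  have hbig : H.card < (S ∩ (H * {x})).card + (S ∩ (H * {y})).card := by
    by_cases hyx : y * x⁻¹ ∈ K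
    · have hEq : H * ({y} : Finset G) = H * {x} := by
        ext g
        rw [hmem, hmem]
        have : g * x⁻¹ = g * y⁻¹ * (y * x⁻¹) := by group
        rw [this, Subgroup.mul_mem_cancel_right _ hyx]
      obtain ⟨c, hc, rfl⟩ := hC
      have hcx : c * x⁻¹ ∉ K := by
        intro h
        apply hxy
        have hxc : x * c⁻¹ ∈ K := by simpa using K.inv_mem h
        rw [Finset.mem_inter, Finset.mem_inter, hmem, hmem]
        refine ⟨⟨hx, hxc⟩, hy, ?_⟩
        have : y * c⁻¹ = y * x⁻¹ * (x * c⁻¹) := by group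
        rw [this]; exact K.mul_mem hyx hxc
      have := two x hx c hc hcx
      have := hCmin x hx
      rw [hEq]; omega
    · have := two x hx y hy hyx
      omega
  intro z hz
  rw [Finset.mem_mul] at hz
  obtain ⟨w, hw, y', hy', rfl⟩ := hz
  rw [Finset.mem_singleton] at hy'
  subst hy'
  rw [Finset.mem_mul] at hw
  obtain ⟨x', hx', h, hh, rfl⟩ := hw
  rw [Finset.mem_singleton] at hx'
  subst hx'
  let f : G → G := fun s => s * (x⁻¹ * h * y')
  have hf : Function.Injective f := fun a b hab => mul_right_cancel hab
  have hfc : ((S ∩ (H * {x})).image f).card = (S ∩ (H * {x})).card := Finset.card_image_of_injective _ hf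
  have hfs : (S ∩ (H * {x})).image f ⊆ H * {y'} := by
    intro g hg
    rw [Finset.mem_image] at hg
    obtain ⟨s, hs, rfl⟩ := hg
    rw [Finset.mem_inter, hmem] at hs
    rw [hmem]
    have : f s * y'⁻¹ = s * x⁻¹ * h := by simp [f, mul_assoc]
    rw [this]
    exact K.mul_mem hs.2 ((hK h).2 hh)
  have hint : ((S ∩ (H * {x})).image f ∩ (S ∩ (H * {y'}))).Nonempty := by
    rw [← Finset.card_pos]
    have c1 := Finset.card_union_add_card_inter ((S ∩ (H * {x})).image f) (S ∩ (H * {y'}))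
    have c2 := Finset.card_le_card (Finset.union_subset hfs (Finset.inter_subset_right : S ∩ (H * {y'}) ⊆ _))
    rw [hcardx] at c2
    omega
  obtain ⟨t, ht⟩ := hint
  rw [Finset.mem_inter, Finset.mem_image] at ht
  obtain ⟨⟨s, hs, hst⟩, ht2⟩ := ht
  rw [Finset.mem_mul]
  refine ⟨s⁻¹, Finset.inv_mem_inv (Finset.mem_inter.1 hs).1, t, (Finset.mem_inter.1 ht2).1, ?_⟩
  rw [← hst]
  simp [f]

section bad
variable [Fintype G]

def hit (S X : Finset G) : Finset G := Finset.univ.filter (fun g => ∃ x ∈ X, g * x ∈ S)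

lemma mem_hit (S X : Finset G) (g : G) : g ∈ hit S X ↔ ∃ x ∈ X, g * x ∈ S := by simp [hit]

lemma hit_mono (S : Finset G) {X Y : Finset G} (h : X ⊆ Y) : hit S X ⊆ hit S Y := by
  intro g hg
  rw [mem_hit] at hg ⊢
  obtain ⟨x, hx, hx2⟩ := hg
  exact ⟨x, h hx, hx2⟩

lemma hit_union (S X Y : Finset G) : hit S (X ∪ Y) = hit S X ∪ hit S Y := by
  ext g
  simp only [mem_hit, Finset.mem_union]
  constructor
  · rintro ⟨x, hx | hx, h⟩
    · exact Or.inl ⟨x, hx, h⟩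
    · exact Or.inr ⟨x, hx, h⟩
  · rintro (⟨x, hx, h⟩ | ⟨x, hx, h⟩)
    · exact ⟨x, Or.inl hx, h⟩
    · exact ⟨x, Or.inr hx, h⟩

lemma card_hit_smul (S X : Finset G) (k : G) : (hit S (k • X)).card = (hit S X).card := by
  apply Finset.card_bij (fun g _ => g * k)
  · intro g hg
    rw [mem_hit] at hg ⊢
    obtain ⟨x, hx, h⟩ := hg
    rw [Finset.mem_smul_finset] at hx
    obtain ⟨y, hy, rfl⟩ := hx
    exact ⟨y, hy, by simpa [mul_assoc] using h⟩
  · intro a _ b _ h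
    exact mul_right_cancel h
  · intro g hg
    rw [mem_hit] at hg
    obtain ⟨x, hx, h⟩ := hg
    refine ⟨g * k⁻¹, ?_, by simp⟩
    rw [mem_hit]
    exact ⟨k * x, Finset.smul_mem_smul_finset hx, by simpa [mul_assoc] using h⟩

lemma hit_bounds (S : Finset G) (a κ : ℕ)
    (A1 : ∀ Y, MemFam S Y → Y.card + κ ≤ (Y * S).card)
    (A2 : ∀ Y, MemFam S Y → (Y * S).card ≤ Y.card + κ → a ≤ Y.card) (X : Finset G) (hX : X.Nonempty)
    (hu : hit S X ≠ Finset.univ) :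
    X.card + κ ≤ (hit S X).card ∧
      ((hit S X).card ≤ X.card + κ → X.card + κ + a ≤ Fintype.card G) := by
  set Z := (hit S X)ᶜ with hZ
  have hZne : Z.Nonempty := by
    rw [Finset.nonempty_iff_ne_empty]
    intro h
    rw [hZ, Finset.compl_eq_empty_iff] at h
    exact hu h
  have hsub : Z⁻¹ * S ⊆ Xᶜ := by
    intro x hx
    rw [Finset.mem_mul] at hx
    obtain ⟨z, hz, s, hs, rfl⟩ := hx
    rw [Finset.mem_compl]
    intro hx
    rw [Finset.mem_inv'] at hz
    rw [hZ, Finset.mem_compl] at hz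
    apply hz
    rw [mem_hit]
    exact ⟨_, hx, by simpa using hs⟩
  have hcs := Finset.card_le_card hsub
  have hF : MemFam S Z⁻¹ := by
    refine ⟨hZne.inv, fun h => ?_⟩
    obtain ⟨x, hx⟩ := hX
    have : x ∈ (↑(Z⁻¹ * S) : Set G) := by rw [h]; trivial
    have := hsub this
    rw [Finset.mem_compl] at this
    exact this hx
  have e1 := A1 _ hF
  have e2 := A2 _ hF
  rw [Finset.card_inv] at e1 e2
  have e3 := Finset.card_compl (hit S X)
  have e4 := Finset.card_compl X
  have e5 := Finset.card_le_univ (hit S X)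
  have e6 := Finset.card_le_univ X
  rw [← hZ] at e3
  refine ⟨by omega, fun h => ?_⟩
  have := e2 (by omega)
  omega

/-- in the bad case there is a subgroup -/
lemma bad_sub (S : Finset G) (H : Finset G) (hF : MemFam S H) (κ : ℕ)
    (hHS : (H * S).card = H.card + κ) (A1 : ∀ Y, MemFam S Y → Y.card + κ ≤ (Y * S).card)
    (A2 : ∀ Y, MemFam S Y → (Y * S).card ≤ Y.card + κ → H.card ≤ Y.card)
    (hbad : Fintype.card G < H.card + (H.card + κ)) :
    ∃ B : Finset G, ∃ K : Subgroup G, (∀ g, g ∈ K ↔ g ∈ B) ∧ B.card + κ + H.card = Fintype.card G ∧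
      (hit S B).card = B.card + κ := by
  obtain ⟨h0, hh0⟩ := hF.1
  obtain ⟨x0, hx0⟩ : ((H * S)ᶜ).Nonempty := by
    rw [Finset.nonempty_iff_ne_empty]
    intro h
    rw [Finset.compl_eq_empty_iff] at h
    apply hF.2; rw [h]; simp
  have hsub : hit S (H * S)ᶜ ⊆ (H⁻¹)ᶜ := by
    intro g hg
    rw [mem_hit] at hg
    obtain ⟨x, hx, h⟩ := hg
    rw [Finset.mem_compl] at hx ⊢
    intro hgH
    apply hx
    rw [Finset.mem_mul]
    rw [Finset.mem_inv'] at hgH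
    exact ⟨g⁻¹, hgH, g * x, h, by simp⟩
  have hcs := Finset.card_le_card hsub
  rw [Finset.card_compl, Finset.card_inv] at hcs
  have hHpos : 0 < H.card := Finset.card_pos.2 ⟨h0, hh0⟩
  have hHle := Finset.card_le_univ (H * S)
  set B := x0⁻¹ • (H * S)ᶜ with hB
  have h1B : (1 : G) ∈ B := by
    rw [hB, Finset.mem_smul_finset]
    exact ⟨x0, hx0, by simp⟩
  have hBc : B.card = Fintype.card G - (H * S).card := by
    rw [hB, Finset.card_smul_finset, Finset.card_compl]
  have hhit : (hit S B).card ≤ Fintype.card G - H.card := by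
    rw [hB, card_hit_smul]; exact hcs
  have hne_of : ∀ X : Finset G, (hit S X).card < Fintype.card G → hit S X ≠ Finset.univ := by
    intro X h1 h2
    rw [h2, Finset.card_univ] at h1
    omega
  have hlow := hit_bounds S H.card κ A1 A2 B ⟨1, h1B⟩ (hne_of _ (by omega))
  have hblock : ∀ g : G, (g • B ∩ B).Nonempty → g • B = B := by
    intro g hne
    by_contra hneq
    have hc : (g • B).card = B.card := Finset.card_smul_finset _ _
    have hlt : (g • B ∩ B).card < B.card := by
      apply Finset.card_lt_card
      refine ⟨Finset.inter_subset_right, fun h => hneq ?_⟩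
      have : B ⊆ g • B := fun x hx => (Finset.mem_inter.1 (h hx)).1
      exact (Finset.eq_of_subset_of_card_le this hc.le).symm
    have e1 : hit S (g • B ∩ B) ⊆ hit S (g • B) ∩ hit S B :=
      Finset.subset_inter (hit_mono S Finset.inter_subset_left) (hit_mono S Finset.inter_subset_right)
    have e2 := hit_union S (g • B) B
    have e3 := card_hit_smul S B g
    have c1 := Finset.card_le_card e1
    have c2 := Finset.card_union_add_card_inter (hit S (g • B)) (hit S B)
    have c3 := Finset.card_union_add_card_inter (g • B) B
    have c4 := Finset.card_le_card (Finset.inter_subset_right : hit S (g • B) ∩ hit S B ⊆ _)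
    rw [← e2] at c2
    have b1 := (hit_bounds S H.card κ A1 A2 (g • B ∩ B) hne (hne_of _ (by omega))).1
    have b2 := (hit_bounds S H.card κ A1 A2 (g • B ∪ B)
      (hne.mono (Finset.inter_subset_right.trans Finset.subset_union_right)) (hne_of _ (by omega))).2
      (by omega)
    omega
  obtain ⟨K, hK⟩ := sub_of_block B h1B hblock
  exact ⟨B, K, hK, by omega, by omega⟩
end bad

section act
variable [Fintype G] {V : Type*} [Fintype V] [DecidableEq V] [MulAction G V]

structure Bad (S : Finset G) (o : V) (M : Finset V) (β c s : ℕ) : Prop where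
  fib : ∀ P : V, (Finset.univ.filter (fun g : G => g • o = P)).card = β
  hM : M = S.image (fun g => g • o)
  cV : Fintype.card V = 2 * c + 1
  cM : M.card = c + 1
  cS : S.card = c * β + s
  hs : 2 ≤ s
  h2s : 2 * s ≤ β
  hc : 2 ≤ c
  hb : ∀ X : Finset G, X.Nonempty → hit S X ≠ Finset.univ → X.card + c * β ≤ (hit S X).card ∧
    ((hit S X).card ≤ X.card + c * β → X.card ≤ β)
  hcard : (S⁻¹ * S).card ≤ 2 * S.card - 2
  hne : S⁻¹ * S ≠ Finset.univ

/-- separation count -/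
def RR (G : Type*) [Group G] [DecidableEq G] [Fintype G] {V : Type*} [DecidableEq V] [MulAction G V]
    (M : Finset V) (P Q : V) : ℕ :=
  (Finset.univ.filter (fun g : G => g • P ∉ M ∧ g • Q ∈ M)).card

def pre (G : Type*) [Group G] [DecidableEq G] [Fintype G] {V : Type*} [DecidableEq V] [MulAction G V]
    (o : V) (T : Finset V) : Finset G := Finset.univ.filter (fun x : G => x • o ∈ T)

lemma mem_pre (o : V) (T : Finset V) (x : G) : x ∈ pre G o T ↔ x • o ∈ T := by simp [pre]

lemma mem_ss (S : Finset G) (x : G) : x ∈ S⁻¹ * S ↔ ∃ a ∈ S, a * x ∈ S := by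
  rw [Finset.mem_mul]
  constructor
  · rintro ⟨y, hy, z, hz, rfl⟩
    exact ⟨y⁻¹, Finset.mem_inv'.1 hy, by simpa using hz⟩
  · rintro ⟨a, ha, hax⟩
    exact ⟨a⁻¹, Finset.inv_mem_inv ha, _, hax, by simp⟩

namespace Bad
variable {S : Finset G} {o : V} {M : Finset V} {β c s : ℕ} (h : Bad S o M β c s)
include h

lemma tr (P : V) : ∃ g : G, g • o = P := by
  have h1 := h.fib P
  have h2 := h.h2s
  have h3 := h.hs
  have : (Finset.univ.filter (fun g : G => g • o = P)).Nonempty := by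
    rw [← Finset.card_pos]; omega
  obtain ⟨g, hg⟩ := this
  exact ⟨g, by simpa using hg⟩

lemma tr2 (P Q : V) : ∃ g : G, g • P = Q := by
  obtain ⟨x, rfl⟩ := h.tr P
  obtain ⟨y, rfl⟩ := h.tr Q
  exact ⟨y * x⁻¹, by simp [mul_smul]⟩

lemma sum_orbit (φ : V → ℕ) (P : V) : ∑ g : G, φ (g • P) = β * ∑ Q, φ Q := by
  obtain ⟨x, rfl⟩ := h.tr P
  have e : ∑ g : G, φ (g • x • o) = ∑ g : G, φ (g • o) := by
    rw [← Equiv.sum_comp (Equiv.mulRight x) (fun g : G => φ (g • o))]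
    simp [mul_smul]
  rw [e, ← Finset.sum_fiberwise Finset.univ (fun g : G => g • o), Finset.mul_sum]
  apply Finset.sum_congr rfl
  intro Q _
  rw [Finset.sum_congr rfl (g := fun _ => φ Q)]
  · rw [Finset.sum_const, h.fib]; simp
  · intro g hg
    simp only [Finset.mem_filter, Finset.mem_univ, true_and] at hg
    rw [hg]

lemma card_orbit (P : V) (T : Finset V) :
    (Finset.univ.filter (fun g : G => g • P ∈ T)).card = β * T.card := by
  have := h.sum_orbit (fun Q => if Q ∈ T then 1 else 0) P
  simpa using this

lemma card_G : Fintype.card G = (2 * c + 1) * β := by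
  have := h.card_orbit o Finset.univ
  simp [h.cV] at this
  rw [this]; ring

lemma card_pre (T : Finset V) : (pre G o T).card = β * T.card := h.card_orbit o T

lemma mem_M (P : V) : P ∈ M ↔ ∃ t ∈ S, t • o = P := by
  rw [h.hM]; simp

lemma mem_hit_pre (T : Finset V) (g : G) : g ∈ hit S (pre G o T) ↔ ∃ P ∈ T, g • P ∈ M := by
  rw [mem_hit]
  constructor
  · rintro ⟨x, hx, hg⟩
    rw [mem_pre] at hx
    exact ⟨_, hx, (h.mem_M _).2 ⟨_, hg, by simp [mul_smul]⟩⟩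
  · rintro ⟨P, hP, hg⟩
    rw [h.mem_M] at hg
    obtain ⟨t, ht, hto⟩ := hg
    refine ⟨g⁻¹ * t, ?_, by simpa using ht⟩
    rw [mem_pre, mul_smul, hto]; simpa using hP

lemma card_hit_single (P : V) : (hit S (pre G o {P})).card = β * (c + 1) := by
  rw [← h.cM, ← h.card_orbit P M]
  congr 1
  ext g
  rw [h.mem_hit_pre]; simp

lemma card_hit_pair (P Q : V) : (hit S (pre G o {P, Q})).card = β * (c + 1) + RR G M P Q := by
  rw [← h.cM, ← h.card_orbit P M, RR, ← Finset.card_union_of_disjoint]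
  · congr 1
    ext g
    rw [h.mem_hit_pre]; simp; tauto
  · rw [Finset.disjoint_left]
    intro g h1 h2
    simp at h1 h2
    exact h2.1 h1

lemma RR_comm (P Q : V) : RR G M P Q = RR G M Q P := by
  have h1 := h.card_hit_pair P Q
  have h2 := h.card_hit_pair Q P
  rw [Finset.pair_comm] at h2
  omega

lemma RR_smul (k : G) (P Q : V) : RR G M (k • P) (k • Q) = RR G M P Q := by
  unfold RR
  apply Finset.card_bij (fun g _ => g * k)
  · intro g hg
    simpa [mul_smul] using hg
  · intro a _ b _ hab
    exact mul_right_cancel hab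
  · intro g hg
    refine ⟨g * k⁻¹, ?_, by simp⟩
    simpa [mul_smul] using hg

lemma ne_univ_of (X : Finset G) (hX : (hit S X).card < (2 * c + 1) * β) : hit S X ≠ Finset.univ := by
  intro e
  rw [e, Finset.card_univ, h.card_G] at hX
  omega

lemma RR_gt (P Q : V) (hPQ : P ≠ Q) : β < RR G M P Q := by
  by_contra hc
  have e := h.card_hit_pair P Q
  have e2 : (pre G o {P, Q}).card = β * 2 := by rw [h.card_pre, Finset.card_pair hPQ]
  have hβ : 0 < β := by have := h.hs; have := h.h2s; omega
  have hcc := h.hc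
  obtain ⟨x, hx⟩ := h.tr P
  have := h.hb (pre G o {P, Q}) ⟨x, by rw [mem_pre, hx]; simp⟩ (h.ne_univ_of _ (by nlinarith))
  have := this.2 (by rw [e, e2]; nlinarith)
  omega

lemma D_inv (x : G) (hx : x ∈ (S⁻¹ * S)ᶜ) : x⁻¹ ∈ (S⁻¹ * S)ᶜ := by
  rw [Finset.mem_compl, mem_ss] at hx ⊢
  rintro ⟨a, ha, hax⟩
  exact hx ⟨_, hax, by simpa using ha⟩

lemma D_card : β + 2 ≤ ((S⁻¹ * S)ᶜ).card + 2 * s := by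
  rw [Finset.card_compl, h.card_G]
  have h1 := h.hcard
  rw [h.cS] at h1
  have h2 := h.hs
  have h3 := h.h2s
  have : (2 * c + 1) * β = 2 * (c * β) + β := by ring
  omega

lemma D_ne : ((S⁻¹ * S)ᶜ).Nonempty := by
  rw [Finset.nonempty_iff_ne_empty]
  intro e
  rw [Finset.compl_eq_empty_iff] at e
  exact h.hne e

lemma D_o (x : G) (hx : x ∈ (S⁻¹ * S)ᶜ) : x • o ≠ o := by
  intro hxo
  rw [Finset.mem_compl, mem_ss] at hx
  have hd : Disjoint S (S.image (fun a => a * x⁻¹)) := by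
    rw [Finset.disjoint_left]
    intro g hg hg2
    rw [Finset.mem_image] at hg2
    obtain ⟨a, ha, rfl⟩ := hg2
    exact hx ⟨_, hg, by simpa using ha⟩
  have hsub : S ∪ S.image (fun a => a * x⁻¹) ⊆ Finset.univ.filter (fun g : G => g • o ∈ M) := by
    intro g hg
    rw [Finset.mem_filter]
    refine ⟨Finset.mem_univ _, ?_⟩
    rw [h.mem_M]
    rw [Finset.mem_union, Finset.mem_image] at hg
    rcases hg with hg | ⟨a, ha, rfl⟩
    · exact ⟨g, hg, rfl⟩
    · refine ⟨a, ha, ?_⟩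
      rw [mul_smul, inv_smul_eq_iff.2 hxo.symm]
  have c1 := Finset.card_le_card hsub
  rw [h.card_orbit, h.cM, Finset.card_union_of_disjoint hd, Finset.card_image_of_injective _ (mul_left_injective _), h.cS] at c1
  have := h.hs
  have := h.hc
  nlinarith

lemma hit_D : (hit S (S⁻¹ * S)ᶜ).card + s ≤ (c + 1) * β := by
  have hd : Disjoint (hit S (S⁻¹ * S)ᶜ) S := by
    rw [Finset.disjoint_left]
    intro g hg hgS
    rw [mem_hit] at hg
    obtain ⟨x, hx, hgx⟩ := hg
    rw [Finset.mem_compl, mem_ss] at hx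
    exact hx ⟨g, hgS, hgx⟩
  have := Finset.card_le_univ (hit S (S⁻¹ * S)ᶜ ∪ S)
  rw [Finset.card_union_of_disjoint hd, h.card_G, h.cS] at this
  nlinarith

end Bad
end act

section act3
variable [Fintype G] {V : Type*} [Fintype V] [DecidableEq V] [MulAction G V]

namespace Bad
variable {S : Finset G} {o : V} {M : Finset V} {β c s : ℕ} (h : Bad S o M β c s)
include h

lemma case_one (y : G) (hy : y ∈ (S⁻¹ * S)ᶜ) (hall : ∀ x ∈ (S⁻¹ * S)ᶜ, x • o = y • o) : False := by
  classical
  have hβ : 0 < β := by have := h.hs; have := h.h2s; omega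
  have hyi := hall _ (h.D_inv y hy)
  have hyo := h.D_o y hy
  set F : Finset G := Finset.univ.filter (fun f => f • o = o ∧ f • y • o = y • o) with hF
  have hDF : ((S⁻¹ * S)ᶜ).card ≤ F.card := by
    apply Finset.card_le_card_of_injOn (fun x => x * y⁻¹)
    · intro x hx
      have hx' : x ∈ (S⁻¹ * S)ᶜ := hx
      have e1 := hall x hx'
      have e2 := hall _ (h.D_inv x hx')
      rw [hF, Finset.mem_coe, Finset.mem_filter]
      refine ⟨Finset.mem_univ _, ?_, ?_⟩
      · rw [mul_smul, hyi, ← e2]; simp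
      · rw [mul_smul]; simpa using e1
    · intro a _ b _ hab
      exact mul_right_cancel hab
  have hw : ∀ g : G, g • o ∈ M ∨ g • y • o ∈ M := by
    by_contra hcon
    push Not at hcon
    obtain ⟨g, hg1, hg2⟩ := hcon
    have hle : F.card ≤ (Finset.univ.filter (fun g : G => g ∉ S ∧ g * y ∉ S)).card := by
      apply Finset.card_le_card_of_injOn (fun f => g * f)
      · intro f hf
        rw [hF, Finset.mem_coe, Finset.mem_filter] at hf
        obtain ⟨_, f1, f2⟩ := hf
        rw [Finset.mem_coe, Finset.mem_filter]
        refine ⟨Finset.mem_univ _, fun hh => hg1 ?_, fun hh => hg2 ?_⟩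
        · rw [h.mem_M]
          exact ⟨_, hh, by rw [mul_smul, f1]⟩
        · rw [h.mem_M]
          exact ⟨_, hh, by rw [mul_smul, mul_smul, f2]⟩
      · intro a _ b _ hab
        exact mul_left_cancel hab
    have hd : Disjoint S (S.image (fun a => a * y⁻¹)) := by
      rw [Finset.disjoint_left]
      intro g hg hg2
      rw [Finset.mem_image] at hg2
      obtain ⟨a, ha, rfl⟩ := hg2
      rw [Finset.mem_compl, mem_ss] at hy
      exact hy ⟨_, hg, by simpa using ha⟩
    have hcd : Disjoint (S ∪ S.image (fun a => a * y⁻¹)) (Finset.univ.filter (fun g : G => g ∉ S ∧ g * y ∉ S)) := by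
      rw [Finset.disjoint_left]
      intro g hg hg2
      rw [Finset.mem_filter] at hg2
      rw [Finset.mem_union, Finset.mem_image] at hg
      rcases hg with hg | ⟨a, ha, rfl⟩
      · exact hg2.2.1 hg
      · exact hg2.2.2 (by simpa using ha)
    have := Finset.card_le_univ ((S ∪ S.image (fun a => a * y⁻¹)) ∪ (Finset.univ.filter (fun g : G => g ∉ S ∧ g * y ∉ S)))
    rw [Finset.card_union_of_disjoint hcd, Finset.card_union_of_disjoint hd, Finset.card_image_of_injective _ (mul_left_injective _), h.card_G, h.cS] at this
    have d := h.D_card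
    have : (2 * c + 1) * β = 2 * (c * β) + β := by ring
    omega
  have hcount : (Finset.univ.filter (fun g : G => g • o ∈ M ∧ g • y • o ∈ M)).card = β := by
    have c1 := Finset.card_union_add_card_inter (Finset.univ.filter (fun g : G => g • o ∈ M)) (Finset.univ.filter (fun g : G => g • y • o ∈ M))
    have e1 : (Finset.univ.filter (fun g : G => g • o ∈ M)) ∪ (Finset.univ.filter (fun g : G => g • y • o ∈ M)) = Finset.univ := by
      ext g; simpa using hw g
    have e2 : (Finset.univ.filter (fun g : G => g • o ∈ M)) ∩ (Finset.univ.filter (fun g : G => g • y • o ∈ M)) = Finset.univ.filter (fun g : G => g • o ∈ M ∧ g • y • o ∈ M) := by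
      ext g; simp
    rw [e1, e2, h.card_orbit, h.card_orbit, Finset.card_univ, h.card_G, h.cM] at c1
    nlinarith
  have hstab : ∀ b : G, b • o = o → b • y • o = y • o := by
    intro b hb
    by_contra hne
    have hgt := h.RR_gt _ _ hne
    have : RR G M (b • y • o) (y • o) ≤ β := by
      rw [← hcount]
      apply Finset.card_le_card
      intro g hg
      simp only [Finset.mem_filter, Finset.mem_univ, true_and] at hg ⊢
      refine ⟨?_, hg.2⟩
      have := hw (g * b)
      rw [mul_smul, mul_smul, hb] at this
      rcases this with h' | h'
      · exact h'
      · exact absurd h' hg.1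
    omega
  have hyy : y • y • o = o := by
    rw [← hyi]; simp
  have hwell : ∀ x x' : G, x • o = x' • o → (x * y) • o = (x' * y) • o := by
    intro x x' hx
    have := hstab (x'⁻¹ * x) (by rw [mul_smul, hx]; simp)
    rw [mul_smul, inv_smul_eq_iff] at this
    rw [mul_smul, mul_smul, this]
  let r : V → V → Prop := fun P Q => ∃ x : G, x • o = P ∧ (x * y) • o = Q
  apply one_reg_false r ?_ ?_ ⟨c, h.cV⟩ ?_
  · rintro P Q ⟨x, rfl, rfl⟩
    exact ⟨x * y, rfl, by rw [mul_smul, mul_smul, hyy]⟩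
  · rintro P ⟨x, rfl, hx⟩
    rw [mul_smul] at hx
    exact hyo (smul_left_cancel x hx)
  · intro P
    obtain ⟨x, rfl⟩ := h.tr P
    unfold edeg
    rw [Finset.card_eq_one]
    refine ⟨(x * y) • o, ?_⟩
    ext Q
    simp only [Finset.mem_filter, Finset.mem_univ, true_and, Finset.mem_singleton, r]
    constructor
    · rintro ⟨x', hx', rfl⟩
      exact hwell _ _ hx'
    · rintro rfl
      exact ⟨x, rfl, rfl⟩

/-- double count -/
lemma double_count (r : V → V → Prop) [DecidableRel r] (hr : ∀ (g : G) P Q, r (g • P) (g • Q) ↔ r P Q) :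
    ∑ Q ∈ Finset.univ.filter (fun Q => r o Q), RR G M o Q = β * ecut r Mᶜ := by
  unfold ecut
  rw [← h.sum_orbit (fun P => ∑ Q : V, if (P ∈ Mᶜ ∧ Q ∉ Mᶜ ∧ r P Q) then 1 else 0) o]
  have e : ∀ g : G, (∑ Q : V, if (g • o ∈ Mᶜ ∧ Q ∉ Mᶜ ∧ r (g • o) Q) then 1 else 0) =
      ∑ Q : V, if (g • o ∈ Mᶜ ∧ g • Q ∉ Mᶜ ∧ r o Q) then 1 else 0 := by
    intro g
    rw [← Equiv.sum_comp (MulAction.toPerm g)]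
    apply Finset.sum_congr rfl
    intro Q _
    simp [hr]
  simp only [e]
  rw [Finset.sum_comm, Finset.sum_filter]
  apply Finset.sum_congr rfl
  intro Q _
  by_cases hq : r o Q
  · rw [if_pos hq, RR, Finset.card_eq_sum_ones, Finset.sum_filter]
    apply Finset.sum_congr rfl
    intro g _
    simp [hq]
  · simp [hq]

lemma edeg_const (r : V → V → Prop) [DecidableRel r] (hr : ∀ (g : G) P Q, r (g • P) (g • Q) ↔ r P Q) (P : V) :
    edeg r Finset.univ P = edeg r Finset.univ o := by
  obtain ⟨g, rfl⟩ := h.tr P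
  have := edeg_map r (MulAction.toPerm g) (fun a b => hr g a b) Finset.univ o
  simpa using this

lemma cM' : (Mᶜ).card = c := by
  have := h.cM
  rw [Finset.card_compl, h.cV]; omega

/-- parity for orbital graphs -/
lemma even_J (r : V → V → Prop) [DecidableRel r] (hr : ∀ (g : G) P Q, r (g • P) (g • Q) ↔ r P Q)
    (hs : ∀ x y, r x y → r y x) (hi : ∀ x, ¬ r x x) :
    Even (edeg r Finset.univ o) ∧ Even (ecut r Mᶜ) := by
  have h1 := even_sum_edeg r hs hi Finset.univ
  rw [Finset.sum_congr rfl (fun P _ => h.edeg_const r hr P)] at h1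
  simp only [Finset.sum_const, Finset.card_univ, h.cV, smul_eq_mul] at h1
  have hJ : Even (edeg r Finset.univ o) := by
    rw [Nat.even_mul] at h1
    rcases h1 with h1 | h1
    · exact absurd h1 (by simp)
    · exact h1
  refine ⟨hJ, ?_⟩
  have h2 := even_sum_edeg r hs hi Mᶜ
  have h3 : ∑ x ∈ Mᶜ, edeg r Mᶜ x + ecut r Mᶜ = c * edeg r Finset.univ o := by
    rw [ecut_eq, ← Finset.sum_add_distrib, Finset.sum_congr rfl (fun P _ => (edeg_compl r Mᶜ P).trans (h.edeg_const r hr P))]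
    rw [Finset.sum_const, h.cM', smul_eq_mul]
  have h4 : Even (c * edeg r Finset.univ o) := hJ.mul_left c
  rw [← h3] at h4
  exact (Nat.even_add.1 h4).1 h2

end Bad
end act3

section act4
variable [Fintype G] {V : Type*} [Fintype V] [DecidableEq V] [MulAction G V]

def near (G : Type*) [Group G] [DecidableEq G] [Fintype G] {V : Type*} [DecidableEq V] [MulAction G V]
    (M : Finset V) (β : ℕ) (P Q : V) : Prop := P ≠ Q ∧ RR G M P Q < 2 * β

open Classical in
noncomputable instance (M : Finset V) (β : ℕ) : DecidableRel (near G M β) := fun _ _ => Classical.dec _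

namespace Bad
variable {S : Finset G} {o : V} {M : Finset V} {β c s : ℕ} (h : Bad S o M β c s)
include h

lemma near_smul (g : G) (P Q : V) : near G M β (g • P) (g • Q) ↔ near G M β P Q := by
  unfold near
  rw [h.RR_smul]
  simp

lemma near_symm (P Q : V) (hn : near G M β P Q) : near G M β Q P :=
  ⟨hn.1.symm, by rw [← h.RR_comm]; exact hn.2⟩

lemma near_struct (Q0 : V) (hQ0 : near G M β o Q0) : ∃ J e : ℕ,
    (∀ P, edeg (near G M β) Finset.univ P = J) ∧ J * e = 2 * β ∧ 4 ≤ J ∧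
      ∀ P Q, near G M β P Q → RR G M P Q + e = 2 * β := by
  classical
  have hβ : 0 < β := by have := h.hs; have := h.h2s; omega
  set ρ := RR G M o Q0 with hρ
  let r : V → V → Prop := fun P Q => ∃ g : G, (g • o = P ∧ g • Q0 = Q) ∨ (g • o = Q ∧ g • Q0 = P)
  have hrs : ∀ x y, r x y → r y x := fun x y ⟨g, hg⟩ => ⟨g, hg.symm⟩
  have hrR : ∀ x y, r x y → RR G M x y = ρ := by
    rintro x y ⟨g, ⟨rfl, rfl⟩ | ⟨rfl, rfl⟩⟩
    · rw [h.RR_smul]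
    · rw [h.RR_smul, h.RR_comm]
  have hrne : ∀ x y, r x y → x ≠ y := by
    rintro x y ⟨g, ⟨rfl, rfl⟩ | ⟨rfl, rfl⟩⟩ e
    · exact hQ0.1 (smul_left_cancel g e)
    · exact hQ0.1 (smul_left_cancel g e).symm
  have hri : ∀ x, ¬ r x x := fun x hx => hrne x x hx rfl
  have hrinv1 : ∀ (g : G) P Q, r P Q → r (g • P) (g • Q) := by
    rintro g P Q ⟨k, ⟨rfl, rfl⟩ | ⟨rfl, rfl⟩⟩
    · exact ⟨g * k, Or.inl ⟨mul_smul _ _ _, mul_smul _ _ _⟩⟩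
    · exact ⟨g * k, Or.inr ⟨mul_smul _ _ _, mul_smul _ _ _⟩⟩
  have hrinv : ∀ (g : G) P Q, r (g • P) (g • Q) ↔ r P Q := by
    intro g P Q
    refine ⟨fun hh => ?_, hrinv1 g P Q⟩
    have := hrinv1 g⁻¹ _ _ hh
    simpa using this
  have hrn : ∀ x y, r x y → near G M β x y := by
    intro x y hxy
    exact ⟨hrne x y hxy, by rw [hrR x y hxy]; exact hQ0.2⟩
  set N := Finset.univ.filter (fun Q => near G M β o Q) with hN
  set Nh := Finset.univ.filter (fun Q => r o Q) with hNh
  have hsub : Nh ⊆ N := by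
    intro Q hQ
    rw [hNh, Finset.mem_filter] at hQ
    rw [hN, Finset.mem_filter]
    exact ⟨hQ.1, hrn _ _ hQ.2⟩
  set J := edeg (near G M β) Finset.univ o with hJ
  have hJN : N.card = J := by rfl
  have hJh : Nh.card = edeg r Finset.univ o := by rfl
  have dN : ∑ Q ∈ N, RR G M o Q = β * ecut (near G M β) Mᶜ := h.double_count (near G M β) h.near_smul
  have dNh : ∑ Q ∈ Nh, RR G M o Q = β * ecut r Mᶜ := h.double_count r hrinv
  have gm := graph_main (near G M β) h.near_symm (fun x hx => hx.1 rfl) J c (h.edeg_const _ h.near_smul)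
    (fun u v => by
      obtain ⟨g, hg⟩ := h.tr2 u v
      exact ⟨MulAction.toPerm g, fun a b => h.near_smul g a b, hg⟩) h.cV Mᶜ h.cM'
  obtain ⟨ev1, ev2⟩ := h.even_J r hrinv hrs hri
  rw [← hJh] at ev1
  have hQ0h : Q0 ∈ Nh := by
    rw [hNh, Finset.mem_filter]
    exact ⟨Finset.mem_univ _, 1, Or.inl ⟨one_smul _ _, one_smul _ _⟩⟩
  have hNhpos : 0 < Nh.card := Finset.card_pos.2 ⟨_, hQ0h⟩
  have hρ2 : ρ < 2 * β := hQ0.2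
  obtain ⟨e, he⟩ : ∃ e, ρ + e = 2 * β := ⟨2 * β - ρ, by omega⟩
  have sNh : ∑ Q ∈ Nh, RR G M o Q = Nh.card * ρ := by
    rw [Finset.sum_congr rfl (fun Q hQ => hrR o Q (by rw [hNh, Finset.mem_filter] at hQ; exact hQ.2))]
    rw [Finset.sum_const, smul_eq_mul]
  have hlt : ecut r Mᶜ + 2 ≤ 2 * Nh.card := by
    have : ecut r Mᶜ < 2 * Nh.card := by
      have h1 : β * ecut r Mᶜ < β * (2 * Nh.card) := by
        rw [← dNh, sNh]
        calc Nh.card * ρ < Nh.card * (2 * β) := Nat.mul_lt_mul_of_pos_left hρ2 hNhpos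
          _ = β * (2 * Nh.card) := by ring
      exact Nat.lt_of_mul_lt_mul_left h1
    obtain ⟨u, hu⟩ := ev2
    omega
  have hge : 2 * β ≤ Nh.card * e := by
    have h1 : β * (ecut r Mᶜ + 2) ≤ β * (2 * Nh.card) := Nat.mul_le_mul_left _ hlt
    rw [mul_add, ← dNh, sNh] at h1
    have h2 : Nh.card * ρ + Nh.card * e = Nh.card * (2 * β) := by rw [← mul_add, he]
    nlinarith
  have hf1 : ∀ Q ∈ N, RR G M o Q + (2 * β - RR G M o Q) = 2 * β := by
    intro Q hQ
    rw [hN, Finset.mem_filter] at hQ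
    have := hQ.2.2
    omega
  have hsum1 : ∑ Q ∈ N, RR G M o Q + ∑ Q ∈ N, (2 * β - RR G M o Q) = J * (2 * β) := by
    rw [← Finset.sum_add_distrib, Finset.sum_congr rfl hf1, Finset.sum_const, hJN, smul_eq_mul]
  have hle : ∑ Q ∈ N, (2 * β - RR G M o Q) ≤ 2 * β := by
    have h1 : β * (2 * J) ≤ β * (ecut (near G M β) Mᶜ + 2) := Nat.mul_le_mul_left _ gm
    rw [mul_add, ← dN] at h1
    nlinarith
  have hsum2 : ∑ Q ∈ Nh, (2 * β - RR G M o Q) = Nh.card * e := by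
    rw [Finset.sum_congr rfl (g := fun _ => e), Finset.sum_const, smul_eq_mul]
    intro Q hQ
    rw [hNh, Finset.mem_filter] at hQ
    rw [hrR o Q hQ.2]
    omega
  have hsd := Finset.sum_sdiff (f := fun Q => (2 * β - RR G M o Q)) hsub
  have hNN : N \ Nh = ∅ := by
    by_contra hne
    obtain ⟨Q, hQ⟩ := Finset.nonempty_iff_ne_empty.2 hne
    have : 2 * β - RR G M o Q ≤ ∑ Q ∈ N \ Nh, (2 * β - RR G M o Q) :=
      Finset.single_le_sum (f := fun Q => (2 * β - RR G M o Q)) (fun _ _ => Nat.zero_le _) hQ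
    have hQN := (Finset.mem_sdiff.1 hQ).1
    rw [hN, Finset.mem_filter] at hQN
    have := hQN.2.2
    omega
  have hEq : N = Nh := Finset.Subset.antisymm (Finset.sdiff_eq_empty_iff_subset.1 hNN) hsub
  have hJc : Nh.card = J := by rw [← hEq, hJN]
  rw [hJc] at hge hsum2 ev1 hNhpos
  rw [hEq, hsum2] at hle
  have hJe : J * e = 2 * β := le_antisymm hle hge
  refine ⟨J, e, h.edeg_const _ h.near_smul, hJe, ?_, ?_⟩
  · have hgt := h.RR_gt o Q0 hQ0.1
    have : J ≠ 2 := by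
      intro h2
      rw [h2] at hJe
      omega
    obtain ⟨u, hu⟩ := ev1
    omega
  · intro P Q hPQ
    obtain ⟨g, hg⟩ := h.tr2 P o
    have h1 := (h.near_smul g P Q).2 hPQ
    rw [hg] at h1
    have h2 : g • Q ∈ Nh := by
      rw [← hEq, hN, Finset.mem_filter]; exact ⟨Finset.mem_univ _, h1⟩
    rw [hNh, Finset.mem_filter] at h2
    have h3 := hrR _ _ h2.2
    rw [← hg, h.RR_smul] at h3
    rw [h3, he]

end Bad
end act4

section act5
variable [Fintype G] {V : Type*} [Fintype V] [DecidableEq V] [MulAction G V]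

def dpart (S : Finset G) (o : V) (y : V) : Finset G := ((S⁻¹ * S)ᶜ).filter (fun x => x • o = y)

namespace Bad
variable {S : Finset G} {o : V} {M : Finset V} {β c s : ℕ} (h : Bad S o M β c s)
include h

lemma union_bound (T : Finset V) (hT : T ⊆ ((S⁻¹ * S)ᶜ).image (fun x => x • o)) :
    (hit S (pre G o T)).card + s + ∑ y ∈ T, (dpart S o y).card ≤ (c + 1) * β + T.card * β := by
  have hβ : 0 < β := by have := h.hs; have := h.h2s; omega
  have hD := h.hit_D
  have hc2 := h.hc
  have hs2 := h.hs
  have hE : ∀ y ∈ T, (hit S (pre G o {y}) \ hit S (dpart S o y)).card + (dpart S o y).card ≤ β := by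
    intro y hy
    have hyU := hT hy
    rw [Finset.mem_image] at hyU
    obtain ⟨x, hx, hxy⟩ := hyU
    have hsubD : hit S (dpart S o y) ⊆ hit S (S⁻¹ * S)ᶜ := hit_mono S (Finset.filter_subset _ _)
    have hcD := Finset.card_le_card hsubD
    have hsubp : hit S (dpart S o y) ⊆ hit S (pre G o {y}) := by
      apply hit_mono
      intro z hz
      rw [dpart, Finset.mem_filter] at hz
      rw [mem_pre, hz.2]; simp
    have h1 := (h.hb (dpart S o y) ⟨x, by rw [dpart, Finset.mem_filter]; exact ⟨hx, hxy⟩⟩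
      (h.ne_univ_of _ (by nlinarith))).1
    have h2 := Finset.card_sdiff_of_subset hsubp
    have h2' := Finset.card_le_card hsubp
    rw [h.card_hit_single] at h2 h2'
    have : β * (c + 1) = c * β + β := by ring
    omega
  have hsub : hit S (pre G o T) ⊆ hit S (S⁻¹ * S)ᶜ ∪ T.biUnion (fun y => hit S (pre G o {y}) \ hit S (dpart S o y)) := by
    intro g hg
    rw [h.mem_hit_pre] at hg
    obtain ⟨P, hP, hgP⟩ := hg
    rw [Finset.mem_union]
    by_cases hd : g ∈ hit S (dpart S o P)
    · left
      exact hit_mono S (Finset.filter_subset _ _) hd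
    · right
      rw [Finset.mem_biUnion]
      refine ⟨P, hP, ?_⟩
      rw [Finset.mem_sdiff, h.mem_hit_pre]
      exact ⟨⟨P, by simp, hgP⟩, hd⟩
  have c1 := (Finset.card_le_card hsub).trans (Finset.card_union_le _ _)
  have c2 := Finset.card_biUnion_le (s := T) (t := fun y => hit S (pre G o {y}) \ hit S (dpart S o y))
  have c3 := Finset.sum_le_sum hE
  rw [Finset.sum_add_distrib, Finset.sum_const, smul_eq_mul] at c3
  omega

lemma sum_dpart : ∑ y ∈ ((S⁻¹ * S)ᶜ).image (fun x => x • o), (dpart S o y).card = ((S⁻¹ * S)ᶜ).card := by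
  exact (Finset.card_eq_sum_card_image _ _).symm

lemma pair_bound (y z : V) (hy : y ∈ ((S⁻¹ * S)ᶜ).image (fun x => x • o))
    (hz : z ∈ ((S⁻¹ * S)ᶜ).image (fun x => x • o)) (hyz : y ≠ z) :
    RR G M y z + s + ((dpart S o y).card + (dpart S o z).card) ≤ 2 * β := by
  have := h.union_bound {y, z} (by
    intro w hw
    rw [Finset.mem_insert, Finset.mem_singleton] at hw
    rcases hw with rfl | rfl
    · exact hy
    · exact hz)
  rw [h.card_hit_pair, Finset.sum_pair hyz, Finset.card_pair hyz] at this
  have : β * (c + 1) = (c + 1) * β := by ring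
  omega

/-- right invariant sets -/
lemma dvd_inv (T : Finset G) (hT : ∀ g ∈ T, ∀ b : G, b • o = o → g * b ∈ T) : β ∣ T.card := by
  have : T = pre G o (T.image (fun g => g • o)) := by
    ext g
    rw [mem_pre, Finset.mem_image]
    constructor
    · intro hg; exact ⟨g, hg, rfl⟩
    · rintro ⟨k, hk, hkg⟩
      have := hT k hk (k⁻¹ * g) (by rw [mul_smul, ← hkg]; simp)
      simpa using this
  rw [this, h.card_pre]
  exact Dvd.intro _ rfl

/-- final block contradiction -/
lemma block_false (U : Finset V) (hU : U = ((S⁻¹ * S)ᶜ).image (fun x => x • o)) (hU2 : 2 ≤ U.card)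
    (hblock : ∀ g : G, ∀ P ∈ U, g • P ∈ U → ∀ Q ∈ U, g • Q ∈ U) : False := by
  have hβ : 0 < β := by have := h.hs; have := h.h2s; omega
  have hub := h.union_bound U hU.subset
  rw [hU, h.sum_dpart, ← hU] at hub
  have hoU : o ∉ U := by
    rw [hU, Finset.mem_image]
    rintro ⟨x, hx, hxo⟩
    exact h.D_o x hx hxo
  obtain ⟨P0, hP0⟩ : U.Nonempty := Finset.card_pos.1 (by omega)
  obtain ⟨k, hk⟩ := h.tr2 P0 o
  have hdis : Disjoint U (k • U) := by
    rw [Finset.disjoint_left]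
    intro Q hQ hQk
    rw [Finset.mem_smul_finset] at hQk
    obtain ⟨Q', hQ', rfl⟩ := hQk
    have := hblock k Q' hQ' hQ P0 hP0
    rw [hk] at this
    exact hoU this
  have hd : 2 * U.card ≤ 2 * c + 1 := by
    have := Finset.card_le_univ (U ∪ k • U)
    rw [Finset.card_union_of_disjoint hdis, Finset.card_smul_finset, h.cV] at this
    omega
  have hdc : U.card ≤ c := by omega
  have hs2 := h.hs
  have hcp := h.card_pre U
  obtain ⟨x0, hx0⟩ := h.tr P0
  have hb := h.hb (pre G o U) ⟨x0, by rw [mem_pre, hx0]; exact hP0⟩ (h.ne_univ_of _ (by nlinarith))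
  have hgt : β * (U.card + c) < (hit S (pre G o U)).card := by
    by_contra hcon
    have := hb.2 (by rw [hcp]; nlinarith)
    rw [hcp] at this
    nlinarith
  have hlt : (hit S (pre G o U)).card < β * (U.card + c + 1) := by nlinarith
  have hdvd : β ∣ (hit S (k • pre G o U)).card := by
    apply h.dvd_inv
    intro g hg b hbo
    rw [mem_hit] at hg ⊢
    obtain ⟨x, hx, hgx⟩ := hg
    rw [Finset.mem_smul_finset] at hx
    obtain ⟨y, hy, rfl⟩ := hx
    rw [mem_pre] at hy
    refine ⟨b⁻¹ * (k * y), ?_, by simpa [mul_assoc] using hgx⟩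
    rw [Finset.mem_smul_finset]
    refine ⟨k⁻¹ * (b⁻¹ * (k * y)), ?_, by simp⟩
    rw [mem_pre]
    have hbi : b⁻¹ • o = o := by rw [inv_smul_eq_iff]; exact hbo.symm
    have := hblock (k⁻¹ * b⁻¹ * k) P0 hP0 (by
      rw [mul_smul, mul_smul, hk, hbi, ← hk]; simpa using hP0) _ hy
    simpa [mul_smul, mul_assoc] using this
  rw [card_hit_smul] at hdvd
  obtain ⟨m, hm⟩ := hdvd
  rw [hm] at hgt hlt
  have h1 := Nat.lt_of_mul_lt_mul_left hgt
  have h2 := Nat.lt_of_mul_lt_mul_left hlt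
  omega

lemma case_two (hU2 : 2 ≤ (((S⁻¹ * S)ᶜ).image (fun x => x • o)).card) : False := by
  classical
  have hβ : 0 < β := by have := h.hs; have := h.h2s; omega
  set U := ((S⁻¹ * S)ᶜ).image (fun x => x • o) with hU
  have hs2 := h.hs
  have h2s := h.h2s
  have hnear : ∀ y ∈ U, ∀ z ∈ U, y ≠ z → near G M β y z := by
    intro y hy z hz hyz
    have := h.pair_bound y z hy hz hyz
    exact ⟨hyz, by omega⟩
  obtain ⟨y1, hy1, z1, hz1, hyz1⟩ := Finset.one_lt_card.1 (show 1 < U.card by omega)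
  obtain ⟨g1, hg1⟩ := h.tr2 y1 o
  have hn1 := (h.near_smul g1 _ _).2 (hnear y1 hy1 z1 hz1 hyz1)
  rw [hg1] at hn1
  obtain ⟨J, e, hJ, hJe, hJ4, hR⟩ := h.near_struct _ hn1
  have hsubU : ∀ y ∈ U, U.erase y ⊆ Finset.univ.filter (fun z => near G M β y z) := by
    intro y hy z hz
    rw [Finset.mem_erase] at hz
    rw [Finset.mem_filter]
    exact ⟨Finset.mem_univ _, hnear y hy z hz.2 (Ne.symm hz.1)⟩
  have hcardN : ∀ y, (Finset.univ.filter (fun z => near G M β y z)).card = J := hJ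
  have hdJ : U.card ≤ J + 1 := by
    have := Finset.card_le_card (hsubU y1 hy1)
    rw [hcardN, Finset.card_erase_of_mem hy1] at this
    omega
  set d := U.card with hd
  set D := ((S⁻¹ * S)ᶜ).card with hDc
  have hsumD : ∑ y ∈ U, (dpart S o y).card = D := h.sum_dpart
  have hDge : β + 2 ≤ D + 2 * s := h.D_card
  have hrow : ∀ y ∈ U, (d - 1) * s + (d - 1) * (dpart S o y).card + D ≤ (d - 1) * e + (dpart S o y).card := by
    intro y hy
    have h1 : ∑ z ∈ U.erase y, (s + (dpart S o y).card + (dpart S o z).card) ≤ ∑ z ∈ U.erase y, e := by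
      apply Finset.sum_le_sum
      intro z hz
      rw [Finset.mem_erase] at hz
      have a1 := h.pair_bound y z hy hz.2 (Ne.symm hz.1)
      have a2 := hR y z (hnear y hy z hz.2 (Ne.symm hz.1))
      omega
    rw [Finset.sum_add_distrib, Finset.sum_const, Finset.sum_const, Finset.card_erase_of_mem hy] at h1
    have h2 := Finset.sum_erase_add U (fun z => (dpart S o z).card) hy
    rw [hsumD] at h2
    simp only [smul_eq_mul] at h1
    rw [mul_add] at h1
    simp only [← hd] at h1
    omega
  have htot := Finset.sum_le_sum hrow
  simp only [Finset.sum_add_distrib, Finset.sum_const, ← Finset.mul_sum, hsumD, smul_eq_mul, ← hd] at htot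
  obtain ⟨f, hf⟩ : ∃ f, d = f + 2 := ⟨d - 2, by omega⟩
  have hde : d * s + 2 * D ≤ d * e := by
    rw [hf] at htot ⊢
    have : f + 2 - 1 = f + 1 := by omega
    rw [this] at htot
    have h3 : (f + 1) * ((f + 2) * s + 2 * D) ≤ (f + 1) * ((f + 2) * e) := by nlinarith
    exact Nat.le_of_mul_le_mul_left h3 (by omega)
  have hJde : J * (d * s + 2 * D) ≤ d * (2 * β) := by
    rw [← hJe]
    calc J * (d * s + 2 * D) ≤ J * (d * e) := Nat.mul_le_mul_left _ hde
      _ = d * (J * e) := by ring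
  rcases Nat.lt_or_ge d 4 with hd4 | hd4
  · have h4 : 4 * (d * s + 2 * D) ≤ J * (d * s + 2 * D) := Nat.mul_le_mul_right _ hJ4
    interval_cases d
    · omega
    · omega
  · rcases Nat.lt_or_ge J d with hJd | hJd
    · -- clique component
      apply h.block_false U hU hU2
      have hnb : ∀ y ∈ U, ∀ z, near G M β y z → z ∈ U := by
        intro y hy z hz
        have e1 : U.erase y = Finset.univ.filter (fun z => near G M β y z) := by
          apply Finset.eq_of_subset_of_card_le (hsubU y hy)
          rw [hcardN, Finset.card_erase_of_mem hy]
          omega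
        have : z ∈ U.erase y := by
          rw [e1, Finset.mem_filter]; exact ⟨Finset.mem_univ _, hz⟩
        exact Finset.mem_of_mem_erase this
      intro g P hP hgP Q hQ
      by_cases hPQ : P = Q
      · rw [← hPQ]; exact hgP
      · exact hnb _ hgP _ ((h.near_smul g P Q).2 (hnear P hP Q hQ hPQ))
    · have h4 : d * (d * s + 2 * D) ≤ d * (2 * β) := (Nat.mul_le_mul_right _ hJd).trans hJde
      have h5 := Nat.le_of_mul_le_mul_left h4 (by omega)
      have : 4 * s ≤ d * s := Nat.mul_le_mul_right _ hd4
      omega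

lemma absurd : False := by
  obtain ⟨y, hy⟩ := h.D_ne
  by_cases hall : ∀ x ∈ (S⁻¹ * S)ᶜ, x • o = y • o
  · exact h.case_one y hy hall
  · push Not at hall
    obtain ⟨x, hx, hxy⟩ := hall
    apply h.case_two
    apply Finset.one_lt_card.2
    exact ⟨x • o, Finset.mem_image_of_mem _ hx, y • o, Finset.mem_image_of_mem _ hy, hxy⟩

end Bad
end act5


lemma bad_case [Fintype G] (S : Finset G) (H : Finset G) (hF : MemFam S H) (κ : ℕ)
    (hHS : (H * S).card = H.card + κ) (A1 : ∀ Y, MemFam S Y → Y.card + κ ≤ (Y * S).card)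
    (A2 : ∀ Y, MemFam S Y → (Y * S).card ≤ Y.card + κ → H.card ≤ Y.card)
    (hbad : Fintype.card G < H.card + (H.card + κ)) (haκ : H.card ≤ κ) (hSκ : κ + 2 ≤ S.card)
    (hcard : (S⁻¹ * S).card ≤ 2 * S.card - 2) (hne : S⁻¹ * S ≠ Finset.univ) : False := by
  classical
  obtain ⟨B, K, hK, hBn, hBhit⟩ := bad_sub S H hF κ hHS A1 A2 hbad
  set β := B.card with hβ
  have hβpos : 0 < β := Finset.card_pos.2 ⟨1, (hK 1).1 K.one_mem⟩
  let V := G ⧸ K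
  let o : V := ((1 : G) : G ⧸ K)
  have hsmul : ∀ g : G, g • o = ((g : G) : G ⧸ K) := by
    intro g
    show g • ((1 : G) : G ⧸ K) = _
    rw [MulAction.Quotient.smul_coe, smul_eq_mul, mul_one]
  have heq : ∀ g k : G, g • o = k • o ↔ g⁻¹ * k ∈ K := by
    intro g k
    rw [hsmul, hsmul, QuotientGroup.eq]
  have fib : ∀ P : V, (Finset.univ.filter (fun g : G => g • o = P)).card = β := by
    intro P
    obtain ⟨x, hx⟩ := QuotientGroup.mk_surjective P
    have e : Finset.univ.filter (fun g : G => g • o = P) = x • B := by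
      ext g
      rw [Finset.mem_filter, ← hx, ← hsmul x, eq_comm, heq]
      simp only [Finset.mem_univ, true_and]
      rw [hK, ← smul_eq_mul, Finset.inv_smul_mem_iff]
    rw [e, Finset.card_smul_finset]
  set M : Finset V := S.image (fun g => g • o) with hM
  have hGV : Fintype.card G = Fintype.card V * β := by
    have := Finset.card_eq_sum_card_fiberwise (f := fun g : G => g • o) (s := Finset.univ) (t := Finset.univ) (fun _ _ => Finset.mem_univ _)
    rw [Finset.sum_congr rfl (fun P _ => fib P), Finset.sum_const, smul_eq_mul] at this
    exact this
  have hhitM : (hit S B).card = M.card * β := by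
    have e : ∀ P ∈ M, ((hit S B).filter (fun g => g • o = P)).card = β := by
      intro P hP
      rw [← fib P]
      congr 1
      ext g
      simp only [Finset.mem_filter, Finset.mem_univ, true_and, and_iff_right_iff_imp]
      intro hg
      rw [hM, Finset.mem_image] at hP
      obtain ⟨t, ht, htP⟩ := hP
      rw [mem_hit]
      refine ⟨g⁻¹ * t, ?_, by simpa using ht⟩
      rw [← hK, ← heq, hg, htP]
    have := Finset.card_eq_sum_card_fiberwise (f := fun g : G => g • o) (s := hit S B) (t := M) (by
      intro g hg
      have hg' : g ∈ hit S B := hg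
      rw [mem_hit] at hg'
      obtain ⟨x, hx, hgx⟩ := hg'
      show g • o ∈ (M : Set V)
      rw [Finset.mem_coe, hM, Finset.mem_image]
      refine ⟨_, hgx, ?_⟩
      apply Eq.symm
      rw [heq, hK]; simpa using hx)
    rw [Finset.sum_congr rfl e, Finset.sum_const, smul_eq_mul] at this
    exact this
  have h2S : 2 * S.card ≤ Fintype.card G := by
    obtain ⟨x, hx⟩ : ((S⁻¹ * S)ᶜ).Nonempty := by
      rw [Finset.nonempty_iff_ne_empty]
      intro e
      rw [Finset.compl_eq_empty_iff] at e
      exact hne e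
    rw [Finset.mem_compl, mem_ss] at hx
    have hd : Disjoint S (S.image (fun a => a * x⁻¹)) := by
      rw [Finset.disjoint_left]
      intro g hg hg2
      rw [Finset.mem_image] at hg2
      obtain ⟨a, ha, rfl⟩ := hg2
      exact hx ⟨_, hg, by simpa using ha⟩
    have := Finset.card_le_univ (S ∪ S.image (fun a => a * x⁻¹))
    rw [Finset.card_union_of_disjoint hd, Finset.card_image_of_injective _ (mul_left_injective _)] at this
    omega
  rw [hhitM] at hBhit
  obtain ⟨c, hc⟩ : ∃ c, M.card = c + 1 := by
    refine ⟨M.card - 1, ?_⟩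
    have : M.card ≠ 0 := by
      intro h0
      rw [h0] at hBhit
      omega
    omega
  have hκ : κ = c * β := by
    rw [hc] at hBhit
    nlinarith
  subst hκ
  have hV : Fintype.card V = 2 * c + 1 := by
    rw [hGV] at hBn h2S
    have h1 : Fintype.card V * β ≤ (2 * c + 1) * β := by nlinarith
    have h2 : (2 * c) * β < Fintype.card V * β := by nlinarith
    have h1' := Nat.le_of_mul_le_mul_right h1 hβpos
    have h2' := Nat.lt_of_mul_lt_mul_right h2
    omega
  rw [hGV, hV] at hBn h2S
  have hHc : H.card = c * β := by nlinarith
  have hc2 : 2 ≤ c := by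
    rw [hGV, hV, hHc] at hbad
    by_contra hcon
    have : c ≤ 1 := by omega
    interval_cases c <;> omega
  obtain ⟨s, hs⟩ : ∃ s, S.card = c * β + s := ⟨S.card - c * β, by omega⟩
  have hb : Bad S o M β c s :=
    { fib := fib
      hM := hM
      cV := hV
      cM := hc
      cS := hs
      hs := by omega
      h2s := by
        rw [hs] at h2S
        nlinarith
      hc := hc2
      hb := by
        intro X hX hu
        have := hit_bounds S H.card (c * β) A1 A2 X hX hu
        refine ⟨this.1, fun hh => ?_⟩
        have := this.2 hh
        rw [hGV, hV] at this
        omega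
      hcard := hcard
      hne := hne }
  exact hb.absurd

/-- Let `G` be a group and `S` a finite faithful generating subset of `G` with
`1 ∈ S`, `|S⁻¹S| ≤ 2|S| − 2` and `S⁻¹S ≠ G`. Let `H` be a basic atom of `S`
and `C` an `H`-right-component of `S` of smallest cardinality. Then for all
`x, y ∈ S` with `(x, y) ∉ C × C`, one has `x⁻¹Hy ⊆ S⁻¹S`. -/
theorem stmt_10 {G : Type*} [Group G] [DecidableEq G] (S : Finset G)
    (h1 : (1 : G) ∈ S) (hgen : Subgroup.closure (S : Set G) = ⊤)
    (hfaith : IsFaithful S)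
    (hcard : (S⁻¹ * S).card ≤ 2 * S.card - 2)
    (hne : (↑(S⁻¹ * S) : Set G) ≠ Set.univ)
    (H : Finset G) (hH : IsAtomOf S H) (h1H : (1 : G) ∈ H)
    (C : Finset G) (hC : ∃ c ∈ S, C = S ∩ (H * {c}))
    (hCmin : ∀ x ∈ S, C.card ≤ (S ∩ (H * {x})).card) :
    ∀ x ∈ S, ∀ y ∈ S, ¬(x ∈ C ∧ y ∈ C) →
      ({x⁻¹} * H * {y} : Finset G) ⊆ S⁻¹ * S := by
  obtain ⟨κ, hHS, A1, A2⟩ := atom_props S h1 H hH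
  have hF := hH.1.1
  have hS1 : 0 < S.card := Finset.card_pos.2 ⟨1, h1⟩
  have hSκ : κ + 2 ≤ S.card := by
    have := A1 S⁻¹ ⟨⟨1, by simpa using h1⟩, hne⟩
    rw [Finset.card_inv] at this
    omega
  have haκ : H.card ≤ κ := by
    have := hfaith H hH
    rw [Finset.card_sdiff_of_subset (subset_mul_one' S H h1), hHS] at this
    omega
  have hgood : ∀ T : Finset G, (T : Set G) = Set.univ → H.card + (H.card + κ) ≤ T.card := by
    intro T hT
    by_contra hcon
    letI : Fintype G := ⟨T, fun x => by rw [← Finset.mem_coe, hT]; trivial⟩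
    refine bad_case S H hF κ hHS A1 A2 ?_ haκ hSκ hcard ?_
    · exact not_le.1 hcon
    · intro e
      apply hne
      rw [e]
      exact Finset.coe_univ
  obtain ⟨K, hK⟩ := sub_of_block H h1H (good_block S H hF κ hHS A1 A2 hgood)
  exact good_case S H (by omega) K hK C hC hCmin
end

section
/- Let G be a group generated by a finite subset S with 1 ∈ S, and let k ≥ 2 be an integer with |S| ≥ k + 1. Suppose there exists a nonempty finite subset T ⊆ G such that TS is a proper subset of G and k(|TS| − |T|) < (k − 1)|S| (i.e. |TS| < |T| + (1 − 1/k)|S| and |TS| < |G|). Then there exists a finite proper subgroup H of G such that |HS| ≤ (k − 1)|H| or |SH| ≤ (k − 1)|H|. -/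
open Pointwise

def Frag13 {G : Type*} [Group G] [DecidableEq G] (S : Finset G) (κ : ℕ) (X : Finset G) : Prop :=
  X.Nonempty ∧ (∃ g, g ∉ X * S) ∧ (X * S).card = X.card + κ

def Lower13 {G : Type*} [Group G] [DecidableEq G] (S : Finset G) (κ : ℕ) : Prop :=
  ∀ X : Finset G, X.Nonempty → (∃ g, g ∉ X * S) → X.card + κ ≤ (X * S).card

lemma frag13_smul {G : Type*} [Group G] [DecidableEq G] {S : Finset G} {κ : ℕ} {X : Finset G}
    (h : Frag13 S κ X) (c : G) : Frag13 S κ (c • X) := by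
  obtain ⟨h1, ⟨g, hg⟩, h3⟩ := h
  refine ⟨h1.smul_finset, ⟨c * g, ?_⟩, ?_⟩
  · rw [smul_mul_assoc, show c * g = c • g from rfl, Finset.smul_mem_smul_finset_iff]
    exact hg
  · rw [smul_mul_assoc, Finset.card_smul_finset, Finset.card_smul_finset, h3]

lemma core13 {G : Type*} [Group G] [DecidableEq G] {S : Finset G} {κ a : ℕ}
    (hL : Lower13 S κ) (A₀ : Finset G) (hA₀ : Frag13 S κ A₀) (hA₀c : A₀.card = a)
    (hmin : ∀ X, Frag13 S κ X → a ≤ X.card)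
    (hU : ∀ A B : Finset G, Frag13 S κ A → A.card = a → B.card = a →
      ((A ∪ B).card + κ ≤ ((A ∪ B) * S).card)) :
    ∃ (H : Subgroup G) (A : Finset G), (H : Set G) = A ∧ Frag13 S κ A := by
  have key : ∀ A B : Finset G, Frag13 S κ A → Frag13 S κ B → A.card = a → B.card = a →
      (A ∩ B).Nonempty → A = B := by
    intro A B hA hB hAc hBc hne
    have hu := hU A B hA hAc hBc
    have hsubA : (A ∩ B) * S ⊆ A * S := Finset.mul_subset_mul_right Finset.inter_subset_left
    have hsubB : (A ∩ B) * S ⊆ B * S := Finset.mul_subset_mul_right Finset.inter_subset_right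
    have hp : ∃ g, g ∉ (A ∩ B) * S := by
      obtain ⟨g, hg⟩ := hA.2.1
      exact ⟨g, fun h => hg (hsubA h)⟩
    have hl := hL _ hne hp
    have e1 := Finset.card_union_add_card_inter A B
    have e2 := Finset.card_union_add_card_inter (A * S) (B * S)
    have e3 := Finset.card_le_card (Finset.subset_inter hsubA hsubB)
    rw [Finset.union_mul] at hu
    have hA3 := hA.2.2
    have hB3 := hB.2.2
    have hf : Frag13 S κ (A ∩ B) := ⟨hne, hp, by omega⟩
    have hm := hmin _ hf
    have i1 : A ∩ B = A := Finset.eq_of_subset_of_card_le Finset.inter_subset_left (by omega)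
    have i2 : A ∩ B = B := Finset.eq_of_subset_of_card_le Finset.inter_subset_right (by omega)
    rw [← i1]; exact i2
  obtain ⟨x, hx⟩ := hA₀.1
  set A := x⁻¹ • A₀ with hAdef
  have hA : Frag13 S κ A := frag13_smul hA₀ _
  have hAc : A.card = a := by rw [hAdef, Finset.card_smul_finset, hA₀c]
  have hone : (1 : G) ∈ A := by
    rw [hAdef, Finset.mem_smul_finset]
    exact ⟨x, hx, by simp⟩
  have htr : ∀ y ∈ A, y⁻¹ • A = A := by
    intro y hy
    refine key _ _ (frag13_smul hA _) hA (by rw [Finset.card_smul_finset, hAc]) hAc ⟨1, ?_⟩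
    rw [Finset.mem_inter]
    exact ⟨Finset.mem_smul_finset.2 ⟨y, hy, by simp⟩, hone⟩
  have hinv : ∀ y ∈ A, y⁻¹ ∈ A := by
    intro y hy
    rw [← htr y hy]
    exact Finset.mem_smul_finset.2 ⟨1, hone, by simp⟩
  refine ⟨{ carrier := A, mul_mem' := ?_, one_mem' := hone, inv_mem' := ?_ }, A, rfl, hA⟩
  · intro y z hy hz
    have := htr _ (hinv y hy)
    rw [inv_inv] at this
    change y * z ∈ A
    rw [← this]
    exact Finset.mem_smul_finset.2 ⟨z, hz, rfl⟩
  · intro y hy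
    exact hinv y hy

lemma dual13 {G : Type*} [Group G] [DecidableEq G] [Fintype G] (S Y : Finset G) :
    ((Y * S⁻¹)ᶜ * S).card + Y.card ≤ Fintype.card G := by
  have : (Y * S⁻¹)ᶜ * S ⊆ Yᶜ := by
    intro z hz
    obtain ⟨x, hx, s, hs, rfl⟩ := Finset.mem_mul.1 hz
    rw [Finset.mem_compl] at hx ⊢
    intro h
    exact hx (Finset.mem_mul.2 ⟨_, h, s⁻¹, Finset.inv_mem_inv hs, by simp⟩)
  have := Finset.card_le_card this
  rw [Finset.card_compl] at this
  have := Finset.card_le_univ Y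
  omega

lemma lower13_inv {G : Type*} [Group G] [DecidableEq G] [Fintype G] {S : Finset G} {κ : ℕ}
    (h1 : (1 : G) ∈ S) (hL : Lower13 S κ) : Lower13 S⁻¹ κ := by
  intro Y hY ⟨g, hg⟩
  have hd := dual13 S Y
  have hl := hL (Y * S⁻¹)ᶜ ⟨g, Finset.mem_compl.2 hg⟩ (by
    by_contra! hc
    have : (Y * S⁻¹)ᶜ * S = Finset.univ := Finset.eq_univ_iff_forall.2 hc
    rw [this, Finset.card_univ] at hd
    have := hY.card_pos
    omega)
  rw [Finset.card_compl] at hl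
  have := Finset.card_le_univ (Y * S⁻¹)
  omega

lemma frag13_inv {G : Type*} [Group G] [DecidableEq G] [Fintype G] {S : Finset G} {κ : ℕ}
    (h1 : (1 : G) ∈ S) (hL : Lower13 S κ) {X : Finset G} (hX : Frag13 S κ X) :
    Frag13 S⁻¹ κ (X * S)ᶜ := by
  have hd := dual13 S⁻¹ X
  rw [inv_inv] at hd
  obtain ⟨hn, ⟨g, hg⟩, hc⟩ := hX
  have hne : ((X * S)ᶜ).Nonempty := ⟨g, Finset.mem_compl.2 hg⟩
  have hp : ∃ g, g ∉ (X * S)ᶜ * S⁻¹ := by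
    by_contra! hcon
    have : (X * S)ᶜ * S⁻¹ = Finset.univ := Finset.eq_univ_iff_forall.2 hcon
    rw [this, Finset.card_univ] at hd
    have := hn.card_pos
    omega
  refine ⟨hne, hp, ?_⟩
  have hl := lower13_inv h1 hL _ hne hp
  rw [Finset.card_compl] at hl ⊢
  have := Finset.card_le_univ (X * S)
  omega

lemma fin13 {G : Type*} [Group G] [DecidableEq G] [Fintype G] {S : Finset G} {κ a : ℕ}
    (h1 : (1 : G) ∈ S)
    (hL : Lower13 S κ) (A₀ : Finset G) (hA₀ : Frag13 S κ A₀) (hA₀c : A₀.card = a)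
    (hmin : ∀ X, Frag13 S κ X → a ≤ X.card)
    (hmin' : ∀ X, Frag13 S⁻¹ κ X → a ≤ X.card) :
    ∃ (H : Subgroup G) (A : Finset G), (H : Set G) = A ∧ Frag13 S κ A := by
  refine core13 hL A₀ hA₀ hA₀c hmin ?_
  intro A B hA hAc hBc
  by_cases hp : ∃ g, g ∉ (A ∪ B) * S
  · exact hL _ (hA.1.mono Finset.subset_union_left) hp
  · push Not at hp
    have : (A ∪ B) * S = Finset.univ := Finset.eq_univ_iff_forall.2 hp
    rw [this, Finset.card_univ]
    have h := hmin' _ (frag13_inv h1 hL hA)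
    rw [Finset.card_compl, hA.2.2] at h
    have := Finset.card_union_le A B
    have := hA.1.card_pos
    omega

lemma final13 {G : Type*} [Group G] [DecidableEq G] {S : Finset G} {κ k : ℕ}
    (hk : 2 ≤ k) (hs : k * κ < (k - 1) * S.card)
    (H : Subgroup G) (A : Finset G) (hHA : (H : Set G) = A) (hA : Frag13 S κ A) :
    (H : Set G).Finite ∧ H ≠ ⊤ ∧
      ((H : Set G) * (↑S : Set G)).ncard ≤ (k - 1) * Nat.card H := by
  have hmem : ∀ x, x ∈ A ↔ x ∈ H := by
    intro x
    rw [← Finset.mem_coe, ← hHA, SetLike.mem_coe]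
  have hSne : S.Nonempty := by
    rw [← Finset.card_pos]
    by_contra h
    have : S.card = 0 := by omega
    simp [this] at hs
  refine ⟨by rw [hHA]; exact A.finite_toSet, ?_, ?_⟩
  · rintro rfl
    obtain ⟨g, hg⟩ := hA.2.1
    obtain ⟨s, hs⟩ := hSne
    exact hg (Finset.mem_mul.2 ⟨g * s⁻¹, (hmem _).2 trivial, s, hs, by simp⟩)
  · have hc : Nat.card H = A.card := by
      rw [← Set.ncard_coe_finset, ← hHA]; rfl
    rw [hc, hHA, ← Finset.coe_mul, Set.ncard_coe_finset]
    have hdvd : A.card ∣ (A * S).card := by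
      apply Finset.card_dvd_card_mul_left
      rintro _ ⟨b, hb, rfl⟩ _ ⟨c, hc, rfl⟩ hbc
      simp only [Function.onFun, id]
      rw [Finset.disjoint_left]
      intro z hz hz'
      apply hbc
      obtain ⟨x, hx, rfl⟩ := Finset.mem_image.1 hz
      obtain ⟨y, hy, hxy⟩ := Finset.mem_image.1 hz'
      rw [hmem] at hx hy
      have hbc2 : b * c⁻¹ ∈ H := by
        have : b * c⁻¹ = x⁻¹ * y := by
          have : y = x * b * c⁻¹ := by rw [← hxy]; simp
          rw [this]; group
        rw [this]
        exact H.mul_mem (H.inv_mem hx) hy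
      ext w
      simp only [Finset.mem_image, hmem]
      constructor
      · rintro ⟨u, hu, rfl⟩
        exact ⟨u * (b * c⁻¹), H.mul_mem hu hbc2, by group⟩
      · rintro ⟨u, hu, rfl⟩
        exact ⟨u * (b * c⁻¹)⁻¹, H.mul_mem hu (H.inv_mem hbc2), by group⟩
    obtain ⟨m, hm⟩ := hdvd
    have hSle : S.card ≤ (A * S).card := Finset.card_le_card_mul_left hA.1
    have hA3 := hA.2.2
    obtain ⟨j, rfl⟩ : ∃ j, k = j + 1 := ⟨k - 1, by omega⟩
    simp only [Nat.add_sub_cancel] at hs ⊢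
    have hpos := hA.1.card_pos
    have hlt : (A * S).card < (j + 1) * A.card := by nlinarith
    rw [hm, mul_comm (j + 1)] at hlt
    have := Nat.lt_of_mul_lt_mul_left hlt
    rw [hm, mul_comm j]
    exact Nat.mul_le_mul_left _ (by omega)

lemma atom13 {G : Type*} [Group G] [DecidableEq G] {S : Finset G} {κ : ℕ}
    (X : Finset G) (hX : Frag13 S κ X) :
    ∃ A, Frag13 S κ A ∧ ∀ X, Frag13 S κ X → A.card ≤ X.card := by
  classical
  have hex : ∃ n, ∃ A, Frag13 S κ A ∧ A.card = n := ⟨_, X, hX, rfl⟩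
  obtain ⟨A, hA, hAc⟩ := Nat.find_spec hex
  refine ⟨A, hA, fun Y hY => ?_⟩
  rw [hAc]
  exact Nat.find_min' hex ⟨Y, hY, rfl⟩

/-- Let `G` be a group generated by a finite subset `S` with `1 ∈ S`, and `k ≥ 2`
an integer with `|S| ≥ k + 1`. Suppose there exists a nonempty finite `T ⊆ G` with
`TS` a proper subset of `G` and `k(|TS| − |T|) < (k − 1)|S|`. Then there exists a
finite proper subgroup `H` of `G` with `|HS| ≤ (k − 1)|H|` or `|SH| ≤ (k − 1)|H|`. -/
theorem stmt_13 {G : Type*} [Group G] [DecidableEq G] (S : Finset G)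
    (h1 : (1 : G) ∈ S) (hgen : Subgroup.closure (S : Set G) = ⊤)
    (k : ℕ) (hk : 2 ≤ k) (hSk : k + 1 ≤ S.card)
    (T : Finset G) (hT : T.Nonempty)
    (hproper : (↑(T * S) : Set G) ≠ Set.univ)
    (hsmall : k * ((T * S).card - T.card) < (k - 1) * S.card) :
    ∃ H : Subgroup G, (H : Set G).Finite ∧ H ≠ ⊤ ∧
      (((H : Set G) * (↑S : Set G)).ncard ≤ (k - 1) * Nat.card H ∨
       ((↑S : Set G) * (H : Set G)).ncard ≤ (k - 1) * Nat.card H) := by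
  classical
  have hle : ∀ (X : Finset G), X.card ≤ (X * S).card := fun X =>
    Finset.card_le_card (fun x hx => Finset.mem_mul.2 ⟨x, hx, 1, h1, mul_one x⟩)
  have hTp : ∃ g, g ∉ T * S := by
    by_contra! h
    exact hproper (Set.eq_univ_of_forall fun g => Finset.mem_coe.2 (h g))
  have hex : ∃ κ, ∃ X, Frag13 S κ X :=
    ⟨(T * S).card - T.card, T, hT, hTp, by have := hle T; omega⟩
  obtain ⟨X, hX⟩ := Nat.find_spec hex
  have hκ : Nat.find hex ≤ (T * S).card - T.card :=
    Nat.find_min' hex ⟨T, hT, hTp, by have := hle T; omega⟩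
  have hL : Lower13 S (Nat.find hex) := by
    intro Y hY hYp
    have := Nat.find_min' hex (m := (Y * S).card - Y.card)
      ⟨Y, hY, hYp, by have := hle Y; omega⟩
    have := hle Y
    omega
  generalize Nat.find hex = κ at hX hκ hL
  have hs : k * κ < (k - 1) * S.card := lt_of_le_of_lt (Nat.mul_le_mul_left _ hκ) hsmall
  obtain ⟨A, hA, hAm⟩ := atom13 X hX
  rcases finite_or_infinite G with hfin | hinf
  · haveI := Fintype.ofFinite G
    obtain ⟨B, hB, hBm⟩ := atom13 _ (frag13_inv h1 hL hX)
    rcases le_total A.card B.card with hab | hab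
    · obtain ⟨H, C, hHC, hC⟩ := fin13 h1 hL A hA rfl hAm (fun Y hY => hab.trans (hBm Y hY))
      obtain ⟨f1, f2, f3⟩ := final13 hk hs H C hHC hC
      exact ⟨H, f1, f2, Or.inl f3⟩
    · have h1' : (1 : G) ∈ S⁻¹ := by simpa using h1
      obtain ⟨H, C, hHC, hC⟩ := fin13 h1' (lower13_inv h1 hL) B hB rfl hBm
        (fun Y hY => hab.trans (hAm Y (by rwa [inv_inv] at hY)))
      obtain ⟨f1, f2, f3⟩ := final13 hk (by rwa [Finset.card_inv]) H C hHC hC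
      refine ⟨H, f1, f2, Or.inr ?_⟩
      have : (S : Set G) * (H : Set G) = ((H : Set G) * ((S⁻¹ : Finset G) : Set G))⁻¹ := by
        rw [mul_inv_rev, Finset.coe_inv, inv_inv, inv_coe_set]
      rw [this, Set.ncard_inv]
      exact f3
  · obtain ⟨H, C, hHC, hC⟩ := core13 hL A hA rfl hAm (fun A' B' hA' _ _ =>
      hL _ (hA'.1.mono Finset.subset_union_left) (Infinite.exists_notMem_finset _))
    obtain ⟨f1, f2, f3⟩ := final13 hk hs H C hHC hC
    exact ⟨H, f1, f2, Or.inl f3⟩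
end

section
/- Let G be a group generated by a finite subset S with 1 ∈ S. Then for every nonempty finite subset X ⊆ G such that XS is a proper subset of G, one has 2(|XS| − |X|) ≥ |S|. (Equivalently, the connectivity satisfies κ(S) ≥ |S|/2.) -/
open Pointwise

theorem stmt_14_atom {G : Type*} [Group G] [DecidableEq G] (T A : Finset G)
    (hA : A.Nonempty) (hp : (↑(A * T) : Set G) ≠ Set.univ)
    (h1 : ∀ B : Finset G, B.Nonempty → (↑(B * T) : Set G) ≠ Set.univ →
      (A * T).card + B.card ≤ (B * T).card + A.card)
    (h2 : ∀ B : Finset G, B.Nonempty → (↑(B * T) : Set G) ≠ Set.univ →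
      (A * T).card + B.card = (B * T).card + A.card → A.card ≤ B.card)
    (h3 : ∀ B : Finset G, B.Nonempty → (↑(B * T⁻¹) : Set G) ≠ Set.univ →
      (A * T).card + B.card ≤ (B * T⁻¹).card + A.card)
    (h4 : ∀ B : Finset G, B.Nonempty → (↑(B * T⁻¹) : Set G) ≠ Set.univ →
      (A * T).card + B.card = (B * T⁻¹).card + A.card → A.card ≤ B.card)
    (g : G) (hg : (A ∩ g • A).Nonempty) : g • A = A := by
  by_contra hne
  have hcard : (g • A).card = A.card := Finset.card_smul_finset g A
  have hcardT : ((g • A) * T).card = (A * T).card := by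
    rw [smul_mul_assoc, Finset.card_smul_finset]
  have hlt : (A ∩ g • A).card < A.card := by
    refine lt_of_le_of_ne (Finset.card_le_card Finset.inter_subset_left) fun h => hne ?_
    have e1 := Finset.eq_of_subset_of_card_le (Finset.inter_subset_left (s₁ := A) (s₂ := g • A)) h.ge
    have e2 : A ⊆ g • A := Finset.inter_eq_left.mp e1
    exact (Finset.eq_of_subset_of_card_le e2 hcard.le).symm
  have hIp : (↑((A ∩ g • A) * T) : Set G) ≠ Set.univ := by
    intro h
    apply hp
    apply Set.eq_univ_of_univ_subset
    rw [← h]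
    exact_mod_cast Finset.mul_subset_mul_right Finset.inter_subset_left
  have hI1 := h1 _ hg hIp
  have hI2 := h2 _ hg hIp
  have hsub : ((A ∩ g • A) * T).card + ((A ∪ g • A) * T).card ≤ 2 * (A * T).card := by
    have e := Finset.card_union_add_card_inter (A * T) ((g • A) * T)
    have e2 : (A ∩ g • A) * T ⊆ (A * T) ∩ ((g • A) * T) := Finset.inter_mul_subset
    have e3 := Finset.card_le_card e2
    rw [Finset.union_mul]
    omega
  have hUI := Finset.card_union_add_card_inter A (g • A)
  have hUne : (A ∪ g • A).Nonempty := hA.mono Finset.subset_union_left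
  by_cases hU : (↑((A ∪ g • A) * T) : Set G) = Set.univ
  · haveI : Fintype G := ⟨(A ∪ g • A) * T, fun x => by
      rw [← Finset.mem_coe, hU]; trivial⟩
    have hU' : (A ∪ g • A) * T = Finset.univ := by
      apply Finset.coe_injective; simpa using hU
    rw [hU'] at hsub
    rw [Finset.card_univ] at hsub
    have hCne : ((A * T)ᶜ).Nonempty := by
      rw [Finset.nonempty_iff_ne_empty]
      intro h
      apply hp
      rw [Finset.compl_eq_empty_iff] at h
      simp [h]
    have hCs : (A * T)ᶜ * T⁻¹ ⊆ Aᶜ := by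
      intro x hx
      obtain ⟨y, hy, t, ht, rfl⟩ := Finset.mem_mul.mp hx
      rw [Finset.mem_compl] at hy ⊢
      intro hm
      apply hy
      have := Finset.mul_mem_mul hm (Finset.mem_inv'.mp ht)
      simpa using this
    have hCp : (↑((A * T)ᶜ * T⁻¹) : Set G) ≠ Set.univ := by
      intro h
      obtain ⟨a, ha⟩ := hA
      have : a ∈ (↑((A * T)ᶜ * T⁻¹) : Set G) := by rw [h]; trivial
      have := hCs (Finset.mem_coe.mp this)
      exact (Finset.mem_compl.mp this) ha
    have c1 := h3 _ hCne hCp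
    have c2 := h4 _ hCne hCp
    have c3 := Finset.card_le_card hCs
    have c4 := Finset.card_add_card_compl A
    have c5 := Finset.card_add_card_compl (A * T)
    omega
  · have := h1 _ hUne hU
    omega

theorem stmt_14_core {G : Type*} [Group G] [DecidableEq G] (T A : Finset G)
    (hT : (1 : G) ∈ T) (hgen : Subgroup.closure (T : Set G) = ⊤)
    (hA : A.Nonempty) (hp : (↑(A * T) : Set G) ≠ Set.univ)
    (hat : ∀ g : G, (A ∩ g • A).Nonempty → g • A = A) :
    T.card ≤ 2 * ((A * T).card - A.card) := by
  have hTle : T.card ≤ (A * T).card := Finset.card_le_card_mul_left hA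
  have hsub : A ⊆ A * T := Finset.subset_mul_left A hT
  have hab : ∀ a ∈ A, ∀ b ∈ A, (b * a⁻¹) • A = A := by
    intro a ha b hb
    apply hat
    refine ⟨b, Finset.mem_inter.mpr ⟨hb, ?_⟩⟩
    rw [Finset.mem_smul_finset]
    exact ⟨a, ha, by simp⟩
  have hy : ∃ y ∈ A * T, y ∉ A := by
    by_contra! hcon
    apply hp
    have key : ∀ g : G, ∀ a, a * g ∈ A ↔ a ∈ A := by
      intro g
      have hg : g ∈ Subgroup.closure (T : Set G) := by rw [hgen]; trivial
      induction hg using Subgroup.closure_induction with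
      | mem t ht =>
        have hsubs : A.image (· * t) ⊆ A := by
          intro x hx
          obtain ⟨a, ha, rfl⟩ := Finset.mem_image.mp hx
          exact hcon _ (Finset.mul_mem_mul ha ht)
        have heq := Finset.eq_of_subset_of_card_le hsubs
          (Finset.card_image_of_injective A (mul_left_injective t)).ge
        intro a
        constructor
        · intro h
          rw [← heq] at h
          obtain ⟨b, hb, e⟩ := Finset.mem_image.mp h
          have : b = a := mul_right_cancel e
          exact this ▸ hb
        · intro h
          exact hcon _ (Finset.mul_mem_mul h ht)
      | one => simp
      | mul x y _ _ hx hy => intro a; rw [← mul_assoc, hy, hx]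
      | inv x _ hx => intro a; rw [← hx (a * x⁻¹)]; simp
    obtain ⟨a, ha⟩ := hA
    apply Set.eq_univ_of_forall
    intro x
    apply hsub
    have := (key (a⁻¹ * x) a).mpr ha
    simpa using this
  obtain ⟨y, hyT, hyA⟩ := hy
  obtain ⟨a, ha⟩ := hA
  have hC : (A.image (· * (a⁻¹ * y))).card = A.card :=
    Finset.card_image_of_injective A (mul_left_injective _)
  have hCs : A.image (· * (a⁻¹ * y)) ⊆ A * T := by
    intro x hx
    obtain ⟨b, hb, rfl⟩ := Finset.mem_image.mp hx
    rw [← hab a ha b hb, smul_mul_assoc, Finset.mem_smul_finset]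
    exact ⟨y, hyT, by simp [mul_assoc]⟩
  have hd : Disjoint A (A.image (· * (a⁻¹ * y))) := by
    rw [Finset.disjoint_left]
    intro x hxA hx
    obtain ⟨b, hb, rfl⟩ := Finset.mem_image.mp hx
    apply hyA
    rw [← hab a ha b hb, Finset.mem_smul_finset] at hxA
    obtain ⟨z, hz, e⟩ := hxA
    have : z = y := by
      have e' : b * a⁻¹ * z = b * a⁻¹ * y := by simpa [mul_assoc] using e
      exact mul_left_cancel e'
    exact this ▸ hz
  have := Finset.card_le_card (Finset.union_subset hsub hCs)
  rw [Finset.card_union_of_disjoint hd] at this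
  omega

/-- Let `G` be a group generated by a finite subset `S` with `1 ∈ S`. Then for
every nonempty finite `X ⊆ G` with `XS` a proper subset of `G`, one has
`2(|XS| − |X|) ≥ |S|`, i.e. `κ(S) ≥ |S|/2`. -/
theorem stmt_14 {G : Type*} [Group G] [DecidableEq G] (S : Finset G)
    (h1 : (1 : G) ∈ S) (hgen : Subgroup.closure (S : Set G) = ⊤)
    (X : Finset G) (hX : X.Nonempty) (hproper : (↑(X * S) : Set G) ≠ Set.univ) :
    S.card ≤ 2 * ((X * S).card - X.card) := by
  let f : Finset G × Finset G → ℕ ×ₗ ℕ := fun p =>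
    toLex ((p.2 * p.1).card - p.2.card, p.2.card)
  let P : Set (Finset G × Finset G) := {p | (p.1 = S ∨ p.1 = S⁻¹) ∧ p.2.Nonempty ∧
    (↑(p.2 * p.1) : Set G) ≠ Set.univ}
  obtain ⟨⟨T, A⟩, ⟨hTS, hA, hAp⟩, hmin⟩ :=
    (InvImage.wf f wellFounded_lt).has_min P ⟨(S, X), Or.inl rfl, hX, hproper⟩
  simp only at hTS hA hAp
  have h1T : (1 : G) ∈ T := by
    rcases hTS with rfl | rfl
    · exact h1
    · simpa using h1
  have hgenT : Subgroup.closure (T : Set G) = ⊤ := by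
    rcases hTS with rfl | rfl
    · exact hgen
    · rw [Finset.coe_inv, Subgroup.closure_inv, hgen]
  have hcT : T.card = S.card := by
    rcases hTS with rfl | rfl
    · rfl
    · exact Finset.card_inv S
  have hTS' : T⁻¹ = S ∨ T⁻¹ = S⁻¹ := by
    rcases hTS with rfl | rfl
    · exact Or.inr rfl
    · left; simp
  have main : ∀ U B : Finset G, (U = S ∨ U = S⁻¹) → B.Nonempty →
      (↑(B * U) : Set G) ≠ Set.univ →
      (A * T).card - A.card < (B * U).card - B.card ∨
      ((A * T).card - A.card = (B * U).card - B.card ∧ A.card ≤ B.card) := by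
    intro U B hU hB hBU
    have := hmin (U, B) ⟨hU, hB, hBU⟩
    have h' : f (T, A) ≤ f (U, B) := not_lt.mp this
    simpa [f, Prod.Lex.toLex_le_toLex] using h'
  have cardle : ∀ U B : Finset G, (1 : G) ∈ U → B.card ≤ (B * U).card := fun U B h =>
    Finset.card_le_card (Finset.subset_mul_left B h)
  have h1T' : (1 : G) ∈ T⁻¹ := by simpa using h1T
  have a0 := cardle T A h1T
  have res := stmt_14_core T A h1T hgenT hA hAp
    (stmt_14_atom T A hA hAp
      (fun B hB hBp => by have := main T B hTS hB hBp; have := cardle T B h1T; omega)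
      (fun B hB hBp => by have := main T B hTS hB hBp; have := cardle T B h1T; omega)
      (fun B hB hBp => by have := main _ B hTS' hB hBp; have := cardle _ B h1T'; omega)
      (fun B hB hBp => by have := main _ B hTS' hB hBp; have := cardle _ B h1T'; omega))
  have := main S X (Or.inl rfl) hX hproper
  omega
end
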